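/- arXiv:1805.04344 — 8 statements merged into one kernel-verified Lean document; each statement's English description precedes it below -/
import Mathlib

section
/- Suppose that for some constants C1, C2 > 0 and some r0 with 1 ≤ r0 < r_G one has sup_{x∈V} Σ_{y∈B^w(x,r0)} w_{x,y}^{-1} ≤ C1·r0^d and inf_{x∈V} μ(B^w(x,r0)) ≥ C2·r0^d. Then there exists a constant C3 > 0, depending only on C1, C2, c_M, d and α (in particular not on r0 or r_G), such that for every x ∈ V and every function f : V → ℝ, Σ_{z∈B(x,r0)} ( f(z) − (f)_{B^w(z,r0)} )² μ_z ≤ C3·r0^α · Σ_{z∈B(x,r0)} Σ_{y∈B(x,2r0)} ( f(z) − f(y) )² w_{z,y} ρ(z,y)^{−(d+α)} μ_z μ_y, where (f)_A := μ(A)^{−1} Σ_{z∈A} f(z) μ_z for a finite nonempty set A ⊆ V. -/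
open scoped ENNReal
open Classical

/-!
The estimate is local: for each `z`, the Cauchy–Schwarz inequality with weights `w_{z,y}` and
`w_{z,y}⁻¹` bounds the squared deviation of `f z` from its average over `B^w(z, r)` by

`(∑_y w_{z,y}⁻¹) / μ(B^w(z, r))² * ∑_y w_{z,y} (f z - f y)² μ_y²`.

The first factor is at most `C1 / C2² * r^{-d}`, and `ρ(z, y) ≤ r` gives
`w_{z,y} ≤ r^{d+α} w_{z,y} ρ(z, y)^{-(d+α)}`, so what remains of the powers of `r` is `r^α`.
The sum over `z ∈ B(x, r)` only sees pairs with `y ∈ B(x, 2r)`.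
-/

section CenterMass

variable {ι R : Type*} [Field R] {s : Finset ι} {m : ι → R}

theorem sub_centerMass {E : Type*} [AddCommGroup E] [Module R E] (hm : ∑ i ∈ s, m i ≠ 0)
    (a : E) (f : ι → E) :
    a - s.centerMass m f = s.centerMass m fun i ↦ a - f i := by
  simp only [Finset.centerMass, smul_sub, Finset.sum_sub_distrib, ← Finset.sum_smul,
    inv_smul_smul₀ hm]

theorem sq_centerMass_le_sum_inv_mul_sum [LinearOrder R] [IsStrictOrderedRing R] {c : ι → R}
    (hc : ∀ i ∈ s, 0 < c i) (f : ι → R) :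
    s.centerMass m f ^ 2 ≤
      (∑ i ∈ s, (c i)⁻¹) / (∑ i ∈ s, m i) ^ 2 * ∑ i ∈ s, c i * (m i * f i) ^ 2 := by
  have cauchy_schwarz : (∑ i ∈ s, m i * f i) ^ 2 ≤
      (∑ i ∈ s, (c i)⁻¹) * ∑ i ∈ s, c i * (m i * f i) ^ 2 :=
    Finset.sum_sq_le_sum_mul_sum_of_sq_le_mul s (fun i hi ↦ (inv_pos.2 (hc i hi)).le)
      (fun i hi ↦ mul_nonneg (hc i hi).le (sq_nonneg _))
      fun i hi ↦ (inv_mul_cancel_left₀ (hc i hi).ne' _).ge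
  calc s.centerMass m f ^ 2 = (∑ i ∈ s, m i * f i) ^ 2 / (∑ i ∈ s, m i) ^ 2 := by
        simp only [Finset.centerMass, smul_eq_mul, inv_mul_eq_div, div_pow]
    _ ≤ (∑ i ∈ s, (c i)⁻¹) * (∑ i ∈ s, c i * (m i * f i) ^ 2) / (∑ i ∈ s, m i) ^ 2 := by gcongr
    _ = _ := by rw [div_mul_eq_mul_div]

end CenterMass

section TsumIte

variable {ι : Type*} {p : ι → Prop} [DecidablePred p]

theorem tsum_ite_eq_sum_toFinset {M : Type*} [AddCommMonoid M] [TopologicalSpace M]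
    (hp : {i | p i}.Finite) (g : ι → M) :
    (∑' i, if p i then g i else 0) = ∑ i ∈ hp.toFinset, g i := by
  have hout : ∀ i ∉ hp.toFinset, (if p i then g i else 0) = 0 := fun i hi ↦
    if_neg (mt hp.mem_toFinset.2 hi)
  rw [tsum_eq_sum hout]
  exact Finset.sum_congr rfl fun i hi ↦ if_pos (hp.mem_toFinset.1 hi)

theorem tsum_ite_ofReal_eq_ofReal_sum_toFinset (hp : {i | p i}.Finite) {g : ι → ℝ}
    (hg : ∀ i, 0 ≤ g i) :
    (∑' i, if p i then ENNReal.ofReal (g i) else 0) =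
      ENNReal.ofReal (∑ i ∈ hp.toFinset, g i) := by
  rw [tsum_ite_eq_sum_toFinset hp, ENNReal.ofReal_sum_of_nonneg fun i _ ↦ hg i]

theorem finite_setOf_of_tsum_ite_ne_top {g : ι → ℝ≥0∞} {ε : ℝ≥0∞} (hε : ε ≠ 0)
    (hg : ∀ i, p i → ε ≤ g i) (hsum : (∑' i, if p i then g i else 0) ≠ ∞) : {i | p i}.Finite :=
  (ENNReal.finite_const_le_of_tsum_ne_top hsum hε).subset fun i (hi : p i) ↦
    (hg i hi).trans_eq (if_pos hi).symm

end TsumIte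

section NonlocalEnergy

variable {V : Type*} [MetricSpace V]

/-- The contribution `(f z - f y)² w_{z,y} ρ(z,y)^{-s} μ_z μ_y` of the pair `(z, y)` to the nonlocal
Dirichlet energy of `f`, with conductances `w`, point masses `μ` and decay exponent `s`. -/
noncomputable def energyDensity (w : V → V → ℝ) (μ f : V → ℝ) (s : ℝ) (z y : V) : ℝ :=
  (f z - f y) ^ 2 * (w z y / dist z y ^ s) * μ z * μ y

variable {w : V → V → ℝ} {μ : V → ℝ} {C₁ C₂ c d α r s : ℝ} {y z : V}

theorem energyDensity_nonneg (hw : 0 ≤ w z y) (hμz : 0 ≤ μ z) (hμy : 0 ≤ μ y) (f : V → ℝ) (s : ℝ) :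
    0 ≤ energyDensity w μ f s z y := by
  unfold energyDensity
  positivity

theorem mul_sq_mul_le_mul_energyDensity (hs : 0 ≤ s) (hw : 0 ≤ w z y) (hzy : dist z y ≤ r)
    (hμz : 0 ≤ μ z) (hμy : 0 ≤ μ y) (hμc : μ y ≤ c) (f : V → ℝ) :
    w z y * (μ y * (f z - f y)) ^ 2 * μ z ≤ c * r ^ s * energyDensity w μ f s z y := by
  unfold energyDensity
  obtain rfl | hne := eq_or_ne z y
  · simp
  have hc : 0 ≤ c := hμy.trans hμc
  have hdist : 0 < dist z y := dist_pos.2 hne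
  have hw_le : w z y ≤ r ^ s * (w z y / dist z y ^ s) :=
    calc w z y = dist z y ^ s * (w z y / dist z y ^ s) := by field_simp
      _ ≤ r ^ s * (w z y / dist z y ^ s) := by gcongr
  calc w z y * (μ y * (f z - f y)) ^ 2 * μ z
      = (f z - f y) ^ 2 * μ y * μ z * (μ y * w z y) := by ring
    _ ≤ (f z - f y) ^ 2 * μ y * μ z * (c * (r ^ s * (w z y / dist z y ^ s))) := by gcongr
    _ = c * r ^ s * ((f z - f y) ^ 2 * (w z y / dist z y ^ s) * μ z * μ y) := by ring

theorem sq_sub_centerMass_mul_le_sum_energyDensity (hC₂ : 0 < C₂) (hdα : 0 ≤ d + α) (hr : 0 < r)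
    (hμ : ∀ x, 0 ≤ μ x ∧ μ x ≤ c) {S : Finset V} (hS : ∀ y ∈ S, dist z y ≤ r ∧ 0 < w z y)
    (hinv : ∑ y ∈ S, (w z y)⁻¹ ≤ C₁ * r ^ d) (hlow : C₂ * r ^ d ≤ ∑ y ∈ S, μ y) (f : V → ℝ) :
    (f z - S.centerMass μ f) ^ 2 * μ z ≤
      C₁ * c / C₂ ^ 2 * r ^ α * ∑ y ∈ S, energyDensity w μ f (d + α) z y := by
  have hmass : 0 < ∑ y ∈ S, μ y := lt_of_lt_of_le (by positivity) hlow
  have hμz : 0 ≤ μ z := (hμ z).1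
  have hinv_nonneg : 0 ≤ ∑ y ∈ S, (w z y)⁻¹ :=
    Finset.sum_nonneg fun y hy ↦ (inv_pos.2 (hS y hy).2).le
  have hratio : (∑ y ∈ S, (w z y)⁻¹) / (∑ y ∈ S, μ y) ^ 2 ≤ C₁ * r ^ d / (C₂ * r ^ d) ^ 2 := by
    have := hinv_nonneg.trans hinv
    gcongr
  have henergy : ∑ y ∈ S, w z y * (μ y * (f z - f y)) ^ 2 * μ z ≤
      c * r ^ (d + α) * ∑ y ∈ S, energyDensity w μ f (d + α) z y := by
    rw [Finset.mul_sum]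
    exact Finset.sum_le_sum fun y hy ↦ mul_sq_mul_le_mul_energyDensity hdα (hS y hy).2.le
      (hS y hy).1 hμz (hμ y).1 (hμ y).2 f
  calc (f z - S.centerMass μ f) ^ 2 * μ z
      ≤ (∑ y ∈ S, (w z y)⁻¹) / (∑ y ∈ S, μ y) ^ 2 *
          (∑ y ∈ S, w z y * (μ y * (f z - f y)) ^ 2) * μ z := by
        rw [sub_centerMass hmass.ne']
        gcongr
        exact sq_centerMass_le_sum_inv_mul_sum (fun y hy ↦ (hS y hy).2) _
    _ = (∑ y ∈ S, (w z y)⁻¹) / (∑ y ∈ S, μ y) ^ 2 *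
          ∑ y ∈ S, w z y * (μ y * (f z - f y)) ^ 2 * μ z := by
        rw [mul_assoc, Finset.sum_mul]
    _ ≤ C₁ * r ^ d / (C₂ * r ^ d) ^ 2 *
          (c * r ^ (d + α) * ∑ y ∈ S, energyDensity w μ f (d + α) z y) := by
        refine mul_le_mul hratio henergy (Finset.sum_nonneg fun y hy ↦ ?_) ?_
        · have := (hS y hy).2
          positivity
        · exact (div_nonneg hinv_nonneg (sq_nonneg _)).trans hratio
    _ = C₁ * c / C₂ ^ 2 * r ^ α * ∑ y ∈ S, energyDensity w μ f (d + α) z y := by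
        rw [Real.rpow_add hr]
        field_simp

theorem ofReal_sum_energyDensity_le_tsum_ball (hw : ∀ y, 0 ≤ w z y) (hμ : ∀ x, 0 ≤ μ x)
    {S : Finset V} (hS : ∀ y ∈ S, dist z y ≤ r) (f : V → ℝ) (s : ℝ) :
    ENNReal.ofReal (∑ y ∈ S, energyDensity w μ f s z y) ≤
      ∑' y, if dist z y ≤ r then ENNReal.ofReal (energyDensity w μ f s z y) else 0 := by
  rw [ENNReal.ofReal_sum_of_nonneg fun y _ ↦ energyDensity_nonneg (hw y) (hμ z) (hμ y) f s]
  exact (Finset.sum_le_sum fun y hy ↦ (if_pos (hS y hy)).ge).trans (ENNReal.sum_le_tsum S)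

theorem ofReal_sq_sub_average_mul_le_tsum_ball (hC₁ : 0 ≤ C₁) (hC₂ : 0 < C₂) (hdα : 0 ≤ d + α)
    (hr : 0 < r) (hμ : ∀ x, 0 ≤ μ x ∧ μ x ≤ c) (hw : ∀ y, 0 ≤ w z y)
    (hfin : {y | dist z y ≤ r ∧ 0 < w z y}.Finite)
    (hinv : (∑' y, if dist z y ≤ r ∧ 0 < w z y then ENNReal.ofReal (w z y)⁻¹ else 0) ≤
      ENNReal.ofReal (C₁ * r ^ d))
    (hlow : ENNReal.ofReal (C₂ * r ^ d) ≤
      ∑' y, if dist z y ≤ r ∧ 0 < w z y then ENNReal.ofReal (μ y) else 0) (f : V → ℝ) :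
    ENNReal.ofReal ((f z - (∑' u, if dist z u ≤ r ∧ 0 < w z u then f u * μ u else 0) /
        (∑' u, if dist z u ≤ r ∧ 0 < w z u then μ u else 0)) ^ 2 * μ z) ≤
      ENNReal.ofReal (C₁ * c / C₂ ^ 2 * r ^ α) *
        ∑' y, if dist z y ≤ r then ENNReal.ofReal (energyDensity w μ f (d + α) z y) else 0 := by
  set S : Finset V := hfin.toFinset with hS_def
  have hS : ∀ y ∈ S, dist z y ≤ r ∧ 0 < w z y := fun y hy ↦ hfin.mem_toFinset.1 hy
  have haverage : (∑' u, if dist z u ≤ r ∧ 0 < w z u then f u * μ u else 0) /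
      (∑' u, if dist z u ≤ r ∧ 0 < w z u then μ u else 0) = S.centerMass μ f := by
    simp only [tsum_ite_eq_sum_toFinset hfin, ← hS_def, Finset.centerMass, smul_eq_mul,
      mul_comm (f _), inv_mul_eq_div]
  rw [tsum_ite_ofReal_eq_ofReal_sum_toFinset hfin fun y ↦ inv_nonneg.2 (hw y),
    ENNReal.ofReal_le_ofReal_iff (by positivity)] at hinv
  rw [tsum_ite_ofReal_eq_ofReal_sum_toFinset hfin fun y ↦ (hμ y).1,
    ENNReal.ofReal_le_ofReal_iff (Finset.sum_nonneg fun y _ ↦ (hμ y).1)] at hlow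
  have hconst : 0 ≤ C₁ * c / C₂ ^ 2 * r ^ α := by
    have : 0 ≤ c := (hμ z).1.trans (hμ z).2
    positivity
  rw [haverage]
  calc ENNReal.ofReal ((f z - S.centerMass μ f) ^ 2 * μ z)
      ≤ ENNReal.ofReal
          (C₁ * c / C₂ ^ 2 * r ^ α * ∑ y ∈ S, energyDensity w μ f (d + α) z y) :=
        ENNReal.ofReal_le_ofReal
          (sq_sub_centerMass_mul_le_sum_energyDensity hC₂ hdα hr hμ hS hinv hlow f)
    _ = ENNReal.ofReal (C₁ * c / C₂ ^ 2 * r ^ α) *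
          ENNReal.ofReal (∑ y ∈ S, energyDensity w μ f (d + α) z y) := ENNReal.ofReal_mul hconst
    _ ≤ _ := by
        gcongr
        exact ofReal_sum_energyDensity_le_tsum_ball hw (fun y ↦ (hμ y).1)
          (fun y hy ↦ (hS y hy).1) f _

theorem stmt_0_general (hC₁ : 0 ≤ C₁) (hC₂ : 0 < C₂) (hdα : 0 ≤ d + α) (hr : 0 < r)
    (hμ : ∀ x, 0 ≤ μ x ∧ μ x ≤ c) (hw : ∀ x y, 0 ≤ w x y)
    (hfin : ∀ z, {y | dist z y ≤ r ∧ 0 < w z y}.Finite)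
    (hinv : ∀ z, (∑' y, if dist z y ≤ r ∧ 0 < w z y then ENNReal.ofReal (w z y)⁻¹ else 0) ≤
      ENNReal.ofReal (C₁ * r ^ d))
    (hlow : ∀ z, ENNReal.ofReal (C₂ * r ^ d) ≤
      ∑' y, if dist z y ≤ r ∧ 0 < w z y then ENNReal.ofReal (μ y) else 0)
    (x : V) (f : V → ℝ) :
    (∑' z, if dist x z ≤ r then
        ENNReal.ofReal ((f z - (∑' u, if dist z u ≤ r ∧ 0 < w z u then f u * μ u else 0) /
          (∑' u, if dist z u ≤ r ∧ 0 < w z u then μ u else 0)) ^ 2 * μ z) else 0) ≤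
      ENNReal.ofReal (C₁ * c / C₂ ^ 2 * r ^ α) *
        ∑' z, ∑' y, if dist x z ≤ r ∧ dist x y ≤ 2 * r then
          ENNReal.ofReal (energyDensity w μ f (d + α) z y) else 0 := by
  rw [← ENNReal.tsum_mul_left]
  refine ENNReal.tsum_le_tsum fun z ↦ ?_
  by_cases hz : dist x z ≤ r
  · have hball (y : V) (hy : dist z y ≤ r) : dist x y ≤ 2 * r := by
      linarith [dist_triangle x z y]
    simp only [hz, true_and, if_true]
    refine (ofReal_sq_sub_average_mul_le_tsum_ball hC₁ hC₂ hdα hr hμ (hw z) (hfin z) (hinv z)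
      (hlow z) f).trans ?_
    gcongr with y
    split_ifs with hy hxy
    · exact le_rfl
    · exact absurd (hball y hy) hxy
    all_goals exact zero_le
  · simp only [hz, if_false, zero_le]

end NonlocalEnergy

/-- Weighted Poincaré-type inequality (Lemma 2.1 of the paper).  On a countable
set `V` carrying a metric `ρ` (with `ρ ≥ 1` off the diagonal), point masses `μ`
comparable to `1`, symmetric nonnegative conductances `w`, and the `d`-set
condition with constants `cG, rG`, if for some `1 ≤ r0 < rG` one has
`sup_x ∑_{y ∈ B^w(x,r0)} w_{x,y}⁻¹ ≤ C1 r0^d` and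
`inf_x μ(B^w(x,r0)) ≥ C2 r0^d`, then there is `C3 > 0` depending only on
`C1, C2, cM, d, α` such that for all `x` and `f`,
`∑_{z ∈ B(x,r0)} (f z − (f)_{B^w(z,r0)})² μ_z ≤
   C3 r0^α ∑_{z ∈ B(x,r0)} ∑_{y ∈ B(x,2r0)} (f z − f y)² w_{z,y} ρ(z,y)^{−(d+α)} μ_z μ_y`. -/
theorem stmt_0
    (C1 C2 cM d α : ℝ)
    (hC1 : 0 < C1) (hC2 : 0 < C2) (hcM : 1 ≤ cM) (hd : 0 < d)
    (hα0 : 0 < α) (hα2 : α < 2) :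
    ∃ C3 : ℝ, 0 < C3 ∧
      ∀ (V : Type) [Countable V] (ρ : V → V → ℝ)
        (_hρ_self : ∀ x : V, ρ x x = 0)
        (_hρ_symm : ∀ x y : V, ρ x y = ρ y x)
        (_hρ_tri : ∀ x y z : V, ρ x z ≤ ρ x y + ρ y z)
        (_hρ_sep : ∀ x y : V, x ≠ y → 1 ≤ ρ x y)
        (μ : V → ℝ)
        (_hμ : ∀ x : V, cM⁻¹ ≤ μ x ∧ μ x ≤ cM)
        (w : V → V → ℝ)
        (_hw_nonneg : ∀ x y : V, 0 ≤ w x y)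
        (_hw_symm : ∀ x y : V, w x y = w y x)
        (_hw_diag : ∀ x : V, w x x = 0)
        (cG : ℝ) (rG : ℝ≥0∞) (_hcG : 1 ≤ cG) (_hrG : 1 < rG)
        (_hdset : ∀ (x : V) (r : ℝ), 1 ≤ r → ENNReal.ofReal r < rG →
          ENNReal.ofReal (cG⁻¹ * r ^ d)
              ≤ (∑' y : V, if ρ x y ≤ r then ENNReal.ofReal (μ y) else 0) ∧
            (∑' y : V, if ρ x y ≤ r then ENNReal.ofReal (μ y) else 0)
              ≤ ENNReal.ofReal (cG * r ^ d))
        (r0 : ℝ) (_hr0 : 1 ≤ r0) (_hr0G : ENNReal.ofReal r0 < rG)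
        (_hinv : ∀ x : V,
          (∑' y : V, if ρ x y ≤ r0 ∧ 0 < w x y then ENNReal.ofReal ((w x y)⁻¹) else 0)
            ≤ ENNReal.ofReal (C1 * r0 ^ d))
        (_hlow : ∀ x : V,
          ENNReal.ofReal (C2 * r0 ^ d)
            ≤ (∑' y : V, if ρ x y ≤ r0 ∧ 0 < w x y then ENNReal.ofReal (μ y) else 0)),
        ∀ (x : V) (f : V → ℝ),
        (∑' z : V, if ρ x z ≤ r0 then
            ENNReal.ofReal ((f z -
                (∑' u : V, if ρ z u ≤ r0 ∧ 0 < w z u then f u * μ u else 0) /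
                  (∑' u : V, if ρ z u ≤ r0 ∧ 0 < w z u then μ u else 0)) ^ 2 * μ z)
          else 0)
        ≤ ENNReal.ofReal (C3 * r0 ^ α) *
          (∑' z : V, ∑' y : V, if ρ x z ≤ r0 ∧ ρ x y ≤ 2 * r0 then
              ENNReal.ofReal ((f z - f y) ^ 2 * (w z y / ρ z y ^ (d + α)) * μ z * μ y)
            else 0) := by
  refine ⟨C1 * cM / C2 ^ 2, by positivity, ?_⟩
  intro V _ ρ hρ_self hρ_symm hρ_tri hρ_sep μ hμ w hw _ _ cG rG _ _ hdset r0 hr0 hr0G hinv hlow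
  let _ : MetricSpace V :=
    { dist := ρ
      dist_self := hρ_self
      dist_comm := hρ_symm
      dist_triangle := hρ_tri
      eq_of_dist_eq_zero := fun {x y} h ↦ by
        by_contra hne
        exact absurd ((hρ_sep x y hne).trans_eq h) (by norm_num) }
  have hcM_inv : 0 < cM⁻¹ := by positivity
  have hball (z : V) : {y | ρ z y ≤ r0}.Finite :=
    finite_setOf_of_tsum_ite_ne_top (ENNReal.ofReal_pos.2 hcM_inv).ne'
      (fun y _ ↦ ENNReal.ofReal_le_ofReal (hμ y).1)
      (ne_top_of_le_ne_top ENNReal.ofReal_ne_top (hdset z r0 hr0 hr0G).2)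
  exact stmt_0_general hC1.le hC2 (by positivity) (by positivity)
    (fun y ↦ ⟨hcM_inv.le.trans (hμ y).1, (hμ y).2⟩) hw
    (fun z ↦ (hball z).subset fun _ hy ↦ hy.1) hinv hlow
end

section
/- Assume d ≥ 1 and set c_* := 8·c_G^{2/d}. Fix a base point 0 ∈ V, θ ∈ (0,1), R0 ≥ 1, c0 > 1/2 and C1 > 0, and suppose that for every R with R0 < R < r_G/(2 c_*) the following hold: (a) μ(B_z^w(x, s)) ≥ c0·μ(B(x, s)) for all x, z ∈ B(0,6R) and all s with R^θ/2 ≤ s ≤ 2 c_* R; (b) sup_{x∈B(0,6R)} Σ_{y∈B^w(x, c_* r)} w_{x,y}^{-1} ≤ C1·r^d for all r with R^θ/2 ≤ r ≤ 2R. Then there exists C2 > 0, depending only on c0, C1, c_G, c_M, d and α (not on R0, R or r_G), such that for every R0 < R < r_G/(2 c_*) and every r with R^θ/2 ≤ r ≤ 2R: inf_{x∈B(0,6R)} Σ_{y∈V : ρ(x,y) > 3r} w_{x,y} ρ(x,y)^{−(d+α)} ≥ C2·r^{−α}. -/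
open scoped ENNReal
open Classical

/-!
On the annulus `3r < ρ(x,y) ≤ c_* r` the weight `ρ(x,y)^{-(d+α)}` is at least `(c_* r)^{-(d+α)}`, so
it suffices to bound the sum of `w_{x,y}` over the annulus below by a multiple of `r ^ d`. The
constant `c_*` is chosen so that the points of `B(x, c_* r)` joined to `x`, a set of measure at
least `c0 · cG⁻¹ (c_* r)^d = c0 · 8^d · cG · r^d`, do not all fit into `B(x, 3r)`, whose measure is
at most `3^d · cG · r^d`: indeed `(3/8)^d ≤ 3/8 < c0`. So the joined part of the annulus has measure
of order `r ^ d`, and as `∑ w⁻¹` over it is at most of this order, Cauchy–Schwarz bounds `∑ w` over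
it below by a multiple of `r ^ d`.
-/

universe u

section Tsum

variable {ι : Type*}

lemma tsum_rpow_mul_rpow_le (f g : ι → ℝ≥0∞) {p q : ℝ} (hp : 0 ≤ p) (hq : 0 ≤ q)
    (hpq : p + q = 1) :
    ∑' i, f i ^ p * g i ^ q ≤ (∑' i, f i) ^ p * (∑' i, g i) ^ q := by
  let _ : MeasurableSpace ι := ⊤
  simpa only [MeasureTheory.lintegral_count] using
    ENNReal.lintegral_mul_norm_pow_le (μ := MeasureTheory.Measure.count)
      (measurable_from_top (f := f)).aemeasurable (measurable_from_top (f := g)).aemeasurable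
      hp hq hpq

lemma sq_tsum_le_tsum_mul_tsum {f g h : ι → ℝ≥0∞} (hfg : ∀ i, h i ^ 2 ≤ f i * g i) :
    (∑' i, h i) ^ 2 ≤ (∑' i, f i) * ∑' i, g i := by
  have sq_rpow_half (a : ℝ≥0∞) : (a ^ (1 / 2 : ℝ)) ^ 2 = a := by
    rw [← ENNReal.rpow_mul_natCast]; norm_num
  have h_le (i : ι) : h i ≤ f i ^ (1 / 2 : ℝ) * g i ^ (1 / 2 : ℝ) := by
    rw [← ENNReal.pow_le_pow_left_iff two_ne_zero, mul_pow, sq_rpow_half, sq_rpow_half]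
    exact hfg i
  calc (∑' i, h i) ^ 2
      ≤ ((∑' i, f i) ^ (1 / 2 : ℝ) * (∑' i, g i) ^ (1 / 2 : ℝ)) ^ 2 := by
        gcongr
        exact (ENNReal.tsum_le_tsum h_le).trans
          (tsum_rpow_mul_rpow_le f g (by norm_num) (by norm_num) (by norm_num))
    _ = (∑' i, f i) * ∑' i, g i := by rw [mul_pow, sq_rpow_half, sq_rpow_half]

end Tsum

/-- The mass `∑_{y ∈ A} f y ∈ [0, ∞]` that the weight `f` gives to the set `A`. It is used with the
point masses `μ`, the conductances `w x ·` and their reciprocals; negative values of `f` count as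
`0`. -/
noncomputable def mass {V : Type*} (f : V → ℝ) (A : Set V) : ℝ≥0∞ :=
  ∑' y : A, ENNReal.ofReal (f y)

section Mass

variable {V : Type*} {f μ w ρ : V → ℝ} {A B : Set V} {a b c m s t β : ℝ}

lemma tsum_ite_ofReal_eq_mass (p : V → Prop) {_ : DecidablePred p} (f : V → ℝ) :
    (∑' y, if p y then ENNReal.ofReal (f y) else 0) = mass f {y | p y} := by
  rw [mass, tsum_subtype {y | p y} fun y => ENNReal.ofReal (f y)]
  refine tsum_congr fun y => ?_
  by_cases hy : p y <;> simp [hy]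

lemma mass_mono (h : A ⊆ B) : mass f A ≤ mass f B :=
  ENNReal.tsum_mono_subtype (fun y => ENNReal.ofReal (f y)) h

lemma mass_union_le : mass f (A ∪ B) ≤ mass f A + mass f B :=
  ENNReal.tsum_union_le (fun y => ENNReal.ofReal (f y)) A B

lemma sq_mass_le (hμ : ∀ y ∈ A, μ y ≤ c) (hw : ∀ y ∈ A, 0 < w y) :
    mass μ A ^ 2 ≤ ENNReal.ofReal c ^ 2 * mass w A * mass (fun y => (w y)⁻¹) A := by
  simp only [mass]
  rw [← ENNReal.tsum_mul_left (a := ENNReal.ofReal c ^ 2)]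
  refine sq_tsum_le_tsum_mul_tsum fun y => ?_
  rw [mul_assoc, ← ENNReal.ofReal_mul (hw y y.2).le, mul_inv_cancel₀ (hw y y.2).ne',
    ENNReal.ofReal_one, mul_one]
  gcongr
  exact hμ y y.2

lemma le_mass_of_mass_inv_le (hm : 0 ≤ m) (hc : 0 < c) (hb : 0 < b) (hμ : ∀ y ∈ A, μ y ≤ c)
    (hw : ∀ y ∈ A, 0 < w y) (hmass : ENNReal.ofReal m ≤ mass μ A)
    (hinv : mass (fun y => (w y)⁻¹) A ≤ ENNReal.ofReal b) :
    ENNReal.ofReal (m ^ 2 / (c ^ 2 * b)) ≤ mass w A := by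
  rw [ENNReal.ofReal_div_of_pos (by positivity)]
  refine ENNReal.div_le_of_le_mul ?_
  calc ENNReal.ofReal (m ^ 2) = ENNReal.ofReal m ^ 2 := ENNReal.ofReal_pow hm 2
    _ ≤ mass μ A ^ 2 := by gcongr
    _ ≤ ENNReal.ofReal c ^ 2 * mass w A * mass (fun y => (w y)⁻¹) A := sq_mass_le hμ hw
    _ ≤ ENNReal.ofReal c ^ 2 * mass w A * ENNReal.ofReal b := by gcongr
    _ = mass w A * ENNReal.ofReal (c ^ 2 * b) := by
      rw [ENNReal.ofReal_mul (sq_nonneg c), ENNReal.ofReal_pow hc.le]; ring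

lemma mass_div_le_mass_div_rpow (ht : 0 < t) (hβ : 0 ≤ β) (hw : ∀ y ∈ A, 0 ≤ w y)
    (hρ : ∀ y ∈ A, 0 < ρ y ∧ ρ y ≤ t) :
    mass w A / ENNReal.ofReal (t ^ β) ≤ mass (fun y => w y / ρ y ^ β) A := by
  rw [mass, div_eq_mul_inv, ← ENNReal.tsum_mul_right]
  refine ENNReal.tsum_le_tsum fun y => ?_
  obtain ⟨hρ_pos, hρ_le⟩ := hρ y y.2
  rw [← div_eq_mul_inv, ← ENNReal.ofReal_div_of_pos (by positivity)]
  exact ENNReal.ofReal_le_ofReal <| div_le_div_of_nonneg_left (hw y y.2) (by positivity)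
    (Real.rpow_le_rpow hρ_pos.le hρ_le hβ)

lemma le_mass_annulus (hb : 0 ≤ b) (hA : ENNReal.ofReal a ≤ mass μ {y | ρ y ≤ t ∧ 0 < w y})
    (hB : mass μ {y | ρ y ≤ s} ≤ ENNReal.ofReal b) :
    ENNReal.ofReal (a - b) ≤ mass μ {y | s < ρ y ∧ ρ y ≤ t ∧ 0 < w y} := by
  rw [ENNReal.ofReal_sub _ hb, tsub_le_iff_right]
  have hcover : {y | ρ y ≤ t ∧ 0 < w y} ⊆
      {y | s < ρ y ∧ ρ y ≤ t ∧ 0 < w y} ∪ {y | ρ y ≤ s} := fun y hy =>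
    (lt_or_ge s (ρ y)).imp (fun h => ⟨h, hy⟩) id
  calc ENNReal.ofReal a ≤ mass μ {y | ρ y ≤ t ∧ 0 < w y} := hA
    _ ≤ mass μ {y | s < ρ y ∧ ρ y ≤ t ∧ 0 < w y} + mass μ {y | ρ y ≤ s} :=
      (mass_mono hcover).trans mass_union_le
    _ ≤ _ := by gcongr

lemma le_mass_div_rpow_tail (hs : 0 ≤ s) (ht : 0 < t) (hβ : 0 ≤ β) (hm : 0 ≤ m) (hc : 0 < c)
    (hb : 0 < b) (hμ : ∀ y, μ y ≤ c)
    (hannulus : ENNReal.ofReal m ≤ mass μ {y | s < ρ y ∧ ρ y ≤ t ∧ 0 < w y})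
    (hinv : mass (fun y => (w y)⁻¹) {y | ρ y ≤ t ∧ 0 < w y} ≤ ENNReal.ofReal b) :
    ENNReal.ofReal (m ^ 2 / (c ^ 2 * b) / t ^ β) ≤
      mass (fun y => w y / ρ y ^ β) {y | s < ρ y} := by
  let A : Set V := {y | s < ρ y ∧ ρ y ≤ t ∧ 0 < w y}
  have hinvA : mass (fun y => (w y)⁻¹) A ≤ ENNReal.ofReal b :=
    (mass_mono fun _ hy => hy.2).trans hinv
  calc ENNReal.ofReal (m ^ 2 / (c ^ 2 * b) / t ^ β)
      = ENNReal.ofReal (m ^ 2 / (c ^ 2 * b)) / ENNReal.ofReal (t ^ β) :=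
        ENNReal.ofReal_div_of_pos (by positivity)
    _ ≤ mass w A / ENNReal.ofReal (t ^ β) := by
        gcongr
        exact le_mass_of_mass_inv_le hm hc hb (fun y _ => hμ y) (fun _ hy => hy.2.2) hannulus hinvA
    _ ≤ mass (fun y => w y / ρ y ^ β) A :=
        mass_div_le_mass_div_rpow ht hβ (fun _ hy => hy.2.2.le)
          fun _ hy => ⟨hs.trans_lt hy.1, hy.2.1⟩
    _ ≤ mass (fun y => w y / ρ y ^ β) {y | s < ρ y} := mass_mono fun _ hy => hy.1

end Mass

section Scales

variable {c0 C1 cG cM d α r : ℝ}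

lemma ball_volume_bounds_gap (hcG : 0 < cG) (hd : d ≠ 0) (hr : 0 ≤ r) :
    c0 * (cG⁻¹ * (8 * cG ^ (2 / d) * r) ^ d) - cG * (3 * r) ^ d =
      cG * (c0 * 8 ^ d - 3 ^ d) * r ^ d := by
  have hpow : (cG ^ (2 / d)) ^ d = cG ^ 2 := by
    rw [← Real.rpow_mul hcG.le, div_mul_cancel₀ _ hd, Real.rpow_two]
  rw [Real.mul_rpow (by positivity) hr, Real.mul_rpow (by norm_num) (by positivity), hpow,
    Real.mul_rpow (by norm_num) hr]
  field_simp

lemma three_rpow_lt_mul_eight_rpow (hc0 : (3 / 8) ^ d < c0) : (3 : ℝ) ^ d < c0 * 8 ^ d := by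
  rwa [Real.div_rpow (by norm_num) (by norm_num), div_lt_iff₀ (by positivity)] at hc0

lemma ofReal_mul_lt_of_lt_div {K R : ℝ} {rG : ℝ≥0∞} (hK : 0 < K) (hr : r ≤ 2 * R)
    (hR : ENNReal.ofReal R < rG / ENNReal.ofReal (2 * K)) : ENNReal.ofReal (K * r) < rG := by
  have hR' : ENNReal.ofReal (2 * K) * ENNReal.ofReal R < rG :=
    mul_comm (ENNReal.ofReal R) _ ▸ ENNReal.mul_lt_of_lt_div hR
  rw [← ENNReal.ofReal_mul (by positivity)] at hR'
  exact (ENNReal.ofReal_le_ofReal (by nlinarith)).trans_lt hR'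

lemma half_le_of_rpow_div_two_le {R θ : ℝ} (hR : 1 ≤ R) (hθ : 0 ≤ θ) (hr : R ^ θ / 2 ≤ r) :
    1 / 2 ≤ r := by
  have hRθ : 1 ≤ R ^ θ := Real.one_le_rpow hR hθ
  linarith

lemma volume_bounds_at_two_scales {v : ℝ → ℝ≥0∞} {K : ℝ} {rG : ℝ≥0∞}
    (hv : ∀ s, 1 ≤ s → ENNReal.ofReal s < rG →
      ENNReal.ofReal (cG⁻¹ * s ^ d) ≤ v s ∧ v s ≤ ENNReal.ofReal (cG * s ^ d))
    (hK : 8 ≤ K) (hr : 1 / 2 ≤ r) (hKr : ENNReal.ofReal (K * r) < rG) :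
    ENNReal.ofReal (cG⁻¹ * (K * r) ^ d) ≤ v (K * r) ∧
      v (3 * r) ≤ ENNReal.ofReal (cG * (3 * r) ^ d) := by
  have h8 : 8 * r ≤ K * r := by gcongr
  have h3 : ENNReal.ofReal (3 * r) < rG :=
    (ENNReal.ofReal_le_ofReal (by linarith)).trans_lt hKr
  exact ⟨(hv (K * r) (by linarith) hKr).1, (hv (3 * r) (by linarith) h3).2⟩

lemma eight_le_eight_mul_rpow (hcG : 1 ≤ cG) (hd : 0 ≤ d) : 8 ≤ 8 * cG ^ (2 / d) :=
  le_mul_of_one_le_right (by norm_num) (Real.one_le_rpow hcG (by positivity))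

/-- The estimate around a single point `x` at a single scale `r`, with `ρ` and `w` standing for
`ρ(x, ·)` and `w_{x,·}`. -/
theorem stmt_1_general (hc0 : (3 / 8) ^ d < c0) (hC1 : 0 < C1) (hcG : 1 ≤ cG) (hcM : 0 < cM)
    (hd : 0 < d) (hα : 0 ≤ d + α) :
    ∃ C2 : ℝ, 0 < C2 ∧ ∀ (V : Type u) (ρ μ w : V → ℝ) (rG : ℝ≥0∞) (r : ℝ),
      (∀ y, μ y ≤ cM) →
      (∀ s, 1 ≤ s → ENNReal.ofReal s < rG →
        ENNReal.ofReal (cG⁻¹ * s ^ d) ≤ mass μ {y | ρ y ≤ s} ∧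
          mass μ {y | ρ y ≤ s} ≤ ENNReal.ofReal (cG * s ^ d)) →
      1 / 2 ≤ r → ENNReal.ofReal (8 * cG ^ (2 / d) * r) < rG →
      ENNReal.ofReal c0 * mass μ {y | ρ y ≤ 8 * cG ^ (2 / d) * r} ≤
        mass μ {y | ρ y ≤ 8 * cG ^ (2 / d) * r ∧ 0 < w y} →
      mass (fun y => (w y)⁻¹) {y | ρ y ≤ 8 * cG ^ (2 / d) * r ∧ 0 < w y} ≤
        ENNReal.ofReal (C1 * r ^ d) →
      ENNReal.ofReal (C2 * r ^ (-α)) ≤ mass (fun y => w y / ρ y ^ (d + α)) {y | 3 * r < ρ y} := by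
  have hcG_pos : 0 < cG := by positivity
  have hK_ge : 8 ≤ 8 * cG ^ (2 / d) := eight_le_eight_mul_rpow hcG hd.le
  set K : ℝ := 8 * cG ^ (2 / d)
  have hK_pos : 0 < K := by positivity
  set a : ℝ := cG * (c0 * 8 ^ d - 3 ^ d) with ha
  have ha_pos : 0 < a := mul_pos hcG_pos (sub_pos.2 (three_rpow_lt_mul_eight_rpow hc0))
  refine ⟨a ^ 2 / (cM ^ 2 * C1 * K ^ (d + α)), by positivity, ?_⟩
  intro V ρ μ w rG r hμ hdset hr_half hKr hjoined hinv
  have hr : 0 < r := by positivity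
  obtain ⟨hlower, hupper⟩ := volume_bounds_at_two_scales hdset hK_ge hr_half hKr
  have hc0_nonneg : 0 ≤ c0 := (Real.rpow_nonneg (by norm_num) d).trans hc0.le
  have hjoined_lower : ENNReal.ofReal (c0 * (cG⁻¹ * (K * r) ^ d)) ≤
      mass μ {y | ρ y ≤ K * r ∧ 0 < w y} := by
    rw [ENNReal.ofReal_mul hc0_nonneg]
    exact (mul_right_mono hlower).trans hjoined
  have hannulus : ENNReal.ofReal (a * r ^ d) ≤
      mass μ {y | 3 * r < ρ y ∧ ρ y ≤ K * r ∧ 0 < w y} := by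
    rw [ha, ← ball_volume_bounds_gap hcG_pos hd.ne' hr.le]
    exact le_mass_annulus (by positivity) hjoined_lower hupper
  have hconst : a ^ 2 / (cM ^ 2 * C1 * K ^ (d + α)) * r ^ (-α) =
      (a * r ^ d) ^ 2 / (cM ^ 2 * (C1 * r ^ d)) / (K * r) ^ (d + α) := by
    rw [Real.mul_rpow hK_pos.le hr.le, Real.rpow_add hr, Real.rpow_neg hr.le]
    field_simp
  rw [hconst]
  exact le_mass_div_rpow_tail (by positivity) (by positivity) hα (by positivity) hcM
    (by positivity) hμ hannulus hinv

end Scales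

/-- Lemma 2.3 of the paper.  With `d ≥ 1` and `c_* := 8 cG^{2/d}`: under the
lower-volume assumption (a) on `B_z^w(x,s)` and the summability assumption (b)
on `w⁻¹` over `B^w(x, c_* r)` for scales `R0 < R < rG/(2 c_*)`, there is
`C2 > 0` depending only on `c0, C1, cG, cM, d, α` such that for all such `R`,
all `R^θ/2 ≤ r ≤ 2R` and all `x ∈ B(0, 6R)`,
`∑_{y : ρ(x,y) > 3r} w_{x,y} ρ(x,y)^{−(d+α)} ≥ C2 r^{−α}`. -/
theorem stmt_1
    (c0 C1 cG cM d α : ℝ)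
    (hc0 : 1 / 2 < c0) (hC1 : 0 < C1) (hcG : 1 ≤ cG) (hcM : 1 ≤ cM)
    (hd : 1 ≤ d) (hα0 : 0 < α) (hα2 : α < 2) :
    ∃ C2 : ℝ, 0 < C2 ∧
      ∀ (V : Type) [Countable V] (ρ : V → V → ℝ)
        (_hρ_self : ∀ x : V, ρ x x = 0)
        (_hρ_symm : ∀ x y : V, ρ x y = ρ y x)
        (_hρ_tri : ∀ x y z : V, ρ x z ≤ ρ x y + ρ y z)
        (_hρ_sep : ∀ x y : V, x ≠ y → 1 ≤ ρ x y)
        (μ : V → ℝ)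
        (_hμ : ∀ x : V, cM⁻¹ ≤ μ x ∧ μ x ≤ cM)
        (w : V → V → ℝ)
        (_hw_nonneg : ∀ x y : V, 0 ≤ w x y)
        (_hw_symm : ∀ x y : V, w x y = w y x)
        (_hw_diag : ∀ x : V, w x x = 0)
        (rG : ℝ≥0∞) (_hrG : 1 < rG)
        (_hdset : ∀ (x : V) (r : ℝ), 1 ≤ r → ENNReal.ofReal r < rG →
          ENNReal.ofReal (cG⁻¹ * r ^ d)
              ≤ (∑' y : V, if ρ x y ≤ r then ENNReal.ofReal (μ y) else 0) ∧
            (∑' y : V, if ρ x y ≤ r then ENNReal.ofReal (μ y) else 0)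
              ≤ ENNReal.ofReal (cG * r ^ d))
        (z0 : V) (θ R0 : ℝ) (_hθ0 : 0 < θ) (_hθ1 : θ < 1) (_hR0 : 1 ≤ R0)
        (_ha : ∀ R : ℝ, R0 < R →
          ENNReal.ofReal R < rG / ENNReal.ofReal (2 * (8 * cG ^ (2 / d))) →
          ∀ x z : V, ρ z0 x ≤ 6 * R → ρ z0 z ≤ 6 * R →
          ∀ s : ℝ, R ^ θ / 2 ≤ s → s ≤ 2 * (8 * cG ^ (2 / d)) * R →
            ENNReal.ofReal c0 *
                (∑' u : V, if ρ x u ≤ s then ENNReal.ofReal (μ u) else 0)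
              ≤ (∑' u : V, if ρ x u ≤ s ∧ 0 < w u z then ENNReal.ofReal (μ u) else 0))
        (_hb : ∀ R : ℝ, R0 < R →
          ENNReal.ofReal R < rG / ENNReal.ofReal (2 * (8 * cG ^ (2 / d))) →
          ∀ r : ℝ, R ^ θ / 2 ≤ r → r ≤ 2 * R →
          ∀ x : V, ρ z0 x ≤ 6 * R →
            (∑' y : V, if ρ x y ≤ 8 * cG ^ (2 / d) * r ∧ 0 < w x y then
                ENNReal.ofReal ((w x y)⁻¹) else 0)
              ≤ ENNReal.ofReal (C1 * r ^ d)),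
        ∀ R : ℝ, R0 < R →
          ENNReal.ofReal R < rG / ENNReal.ofReal (2 * (8 * cG ^ (2 / d))) →
          ∀ r : ℝ, R ^ θ / 2 ≤ r → r ≤ 2 * R →
          ∀ x : V, ρ z0 x ≤ 6 * R →
            ENNReal.ofReal (C2 * r ^ (-α))
              ≤ (∑' y : V, if 3 * r < ρ x y then
                  ENNReal.ofReal (w x y / ρ x y ^ (d + α)) else 0) := by
  have hc0' : (3 / 8) ^ d < c0 :=
    ((Real.rpow_le_self_of_le_one (by norm_num) (by norm_num) hd).trans_lt (by norm_num)).trans hc0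
  have hK : 8 ≤ 8 * cG ^ (2 / d) := eight_le_eight_mul_rpow hcG (by positivity)
  obtain ⟨C2, hC2, hlocal⟩ := stmt_1_general hc0' hC1 hcG (cM := cM) (α := α)
    (by positivity) (by positivity) (by positivity)
  simp only [tsum_ite_ofReal_eq_mass]
  refine ⟨C2, hC2, fun V _ ρ _ _ _ _ μ hμ w _ hw_symm _ rG _ hdset z0 θ R0 hθ _ hR0 ha hb
    R hR hRG r hr hrR x hx => ?_⟩
  have hr_half := half_le_of_rpow_div_two_le (hR0.trans hR.le) hθ.le hr
  exact hlocal V (ρ x) μ (w x) rG r (fun y => (hμ y).2) (hdset x) hr_half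
    (ofReal_mul_lt_of_lt_div (by positivity) hrR hRG)
    (by simpa only [hw_symm _ x] using ha R hR hRG x x hx hx _ (by nlinarith) (by nlinarith))
    (hb R hR hRG r hr hrR x hx)
end

section
/- There exists a constant C, depending only on c_G and d, such that for every x ∈ V, every a ∈ (0,2], every b ∈ ℝ and every function f : V → [0,∞) (with the convention 0·log 0 := 0), one has Σ_{y∈V} max(0, −f(y)·(log f(y) + a·ρ(x,y) + b)) μ_y ≤ C·e^{−b}·a^{−d}. Consequently, whenever the sum Σ_{y∈V} f(y)·(log f(y) + a·ρ(x,y) + b) μ_y is well defined in (−∞,+∞], it is bounded below by −C·e^{−b}·a^{−d}. -/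
open scoped ENNReal
open Classical

/-!
Maximising `t ↦ -t * (log t + s)` over `t ≥ 0` bounds every summand, whatever the value of `f`, by
`exp (-b) * exp (-(a * ρ x y))`. The remaining sum is a Laplace transform of the volume growth:
`∫ exp (-(a * g)) ∂ν = ∫ t in [0, ∞), a * exp (-(a * t)) * ν {g ≤ t}`. Since
`ν {g ≤ t} ≤ c * (1 + t ^ d)`, this is at most `c * (1 + Γ (d + 1) * a ^ (-d))`, and for `a ≤ A` the
constant term is absorbed by `1 ≤ A ^ d * a ^ (-d)`.
-/

open MeasureTheory Set

lemma neg_mul_log_add_le_exp_neg {t : ℝ} (ht : 0 ≤ t) (s : ℝ) :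
    -(t * (Real.log t + s)) ≤ Real.exp (-s) := by
  rcases ht.eq_or_lt with rfl | ht
  · simpa using (Real.exp_pos (-s)).le
  · calc -(t * (Real.log t + s)) = t * -(Real.log t + s) := by ring
      _ ≤ t * Real.exp (-(Real.log t + s)) := by
        gcongr
        linarith [Real.add_one_le_exp (-(Real.log t + s))]
      _ = Real.exp (-s) := by
        rw [neg_add, Real.exp_add, Real.exp_neg, Real.exp_log ht, mul_inv_cancel_left₀ ht.ne']

lemma tsum_le_of_tsum_ofReal_le {ι : Type*} {u : ι → ℝ} {K : ℝ} (hu : Summable u) (hK : 0 ≤ K)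
    (h : ∑' i, ENNReal.ofReal (u i) ≤ ENNReal.ofReal K) : ∑' i, u i ≤ K := by
  refine hu.tsum_le_of_sum_le fun s ↦ (ENNReal.ofReal_le_ofReal_iff hK).1 ?_
  calc ENNReal.ofReal (∑ i ∈ s, u i) ≤ ∑ i ∈ s, ENNReal.ofReal (u i) :=
        Finset.le_sum_of_subadditive _ ENNReal.ofReal_zero.le (fun _ _ ↦ ENNReal.ofReal_add_le) s u
    _ ≤ ∑' i, ENNReal.ofReal (u i) := ENNReal.sum_le_tsum s
    _ ≤ ENNReal.ofReal K := h

lemma lintegral_Ici_mul_exp_neg_mul {a : ℝ} (ha : 0 < a) (s : ℝ) :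
    ∫⁻ t in Ici s, ENNReal.ofReal (a * Real.exp (-(a * t))) =
      ENNReal.ofReal (Real.exp (-(a * s))) := by
  have hint : IntegrableOn (fun t ↦ a * Real.exp (-(a * t))) (Ioi s) := by
    simp_rw [← neg_mul]
    exact (integrableOn_exp_mul_Ioi (neg_lt_zero.2 ha) s).const_mul a
  have hval : ∫ t in Ioi s, a * Real.exp (-(a * t)) = Real.exp (-(a * s)) := by
    simp_rw [integral_const_mul, ← neg_mul, integral_exp_mul_Ioi (neg_lt_zero.2 ha)]
    field_simp
  rw [setLIntegral_congr Ioi_ae_eq_Ici.symm,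
    ← ofReal_integral_eq_lintegral_ofReal hint (ae_of_all _ fun t ↦ by positivity), hval]

lemma lintegral_Ici_mul_exp_neg_mul_mul_rpow {a d : ℝ} (ha : 0 < a) (hd : -1 < d) :
    ∫⁻ t in Ici 0, ENNReal.ofReal (a * Real.exp (-(a * t))) * ENNReal.ofReal (t ^ d) =
      ENNReal.ofReal (Real.Gamma (d + 1) * a ^ (-d)) := by
  have hint : IntegrableOn (fun t : ℝ ↦ a * (t ^ d * Real.exp (-(a * t)))) (Ioi 0) := by
    have hexp := integrableOn_rpow_mul_exp_neg_mul_rpow hd one_pos ha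
    simp_rw [Real.rpow_one, neg_mul] at hexp
    exact hexp.const_mul a
  have hval : ∫ t in Ioi 0, a * (t ^ d * Real.exp (-(a * t))) = Real.Gamma (d + 1) * a ^ (-d) := by
    have hGamma := Real.integral_rpow_mul_exp_neg_mul_Ioi (a := d + 1) (by linarith) ha
    rw [add_sub_cancel_right] at hGamma
    rw [integral_const_mul, hGamma, one_div, Real.inv_rpow ha.le, Real.rpow_add_one ha.ne',
      Real.rpow_neg ha.le]
    field_simp
  have hnonneg : 0 ≤ᵐ[volume.restrict (Ioi 0)] fun t : ℝ ↦ a * (t ^ d * Real.exp (-(a * t))) := by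
    filter_upwards [ae_restrict_mem measurableSet_Ioi] with t (ht : 0 < t)
    positivity
  rw [setLIntegral_congr Ioi_ae_eq_Ici.symm, ← hval,
    ofReal_integral_eq_lintegral_ofReal hint hnonneg]
  refine lintegral_congr fun t ↦ ?_
  rw [← ENNReal.ofReal_mul (by positivity), mul_assoc, mul_comm (Real.exp _)]

lemma lintegral_Ici_mul_exp_neg_mul_mul_one_add_rpow {a d : ℝ} (ha : 0 < a) (hd : -1 < d) :
    ∫⁻ t in Ici 0, ENNReal.ofReal (a * Real.exp (-(a * t))) * ENNReal.ofReal (1 + t ^ d) =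
      ENNReal.ofReal (1 + Real.Gamma (d + 1) * a ^ (-d)) := by
  have hΓ : 0 < Real.Gamma (d + 1) := Real.Gamma_pos_of_pos (by linarith)
  calc ∫⁻ t in Ici 0, ENNReal.ofReal (a * Real.exp (-(a * t))) * ENNReal.ofReal (1 + t ^ d)
      = ∫⁻ t in Ici 0, (ENNReal.ofReal (a * Real.exp (-(a * t))) +
          ENNReal.ofReal (a * Real.exp (-(a * t))) * ENNReal.ofReal (t ^ d)) := by
        refine setLIntegral_congr_fun measurableSet_Ici fun t (ht : 0 ≤ t) ↦ ?_
        simp only [ENNReal.ofReal_add zero_le_one (Real.rpow_nonneg ht d), ENNReal.ofReal_one,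
          mul_add, mul_one]
    _ = ENNReal.ofReal (1 + Real.Gamma (d + 1) * a ^ (-d)) := by
        rw [lintegral_add_left (by fun_prop), lintegral_Ici_mul_exp_neg_mul ha,
          lintegral_Ici_mul_exp_neg_mul_mul_rpow ha hd, mul_zero, neg_zero, Real.exp_zero,
          ← ENNReal.ofReal_add zero_le_one (by positivity)]

lemma sigmaFinite_of_measure_setOf_le_lt_top {X : Type*} [MeasurableSpace X] {ν : Measure X}
    {g : X → ℝ} (h : ∀ n : ℕ, ν {x | g x ≤ n} < ∞) : SigmaFinite ν := by
  refine ⟨⟨⟨fun n ↦ {x | g x ≤ n}, fun _ ↦ trivial, h, ?_⟩⟩⟩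
  exact eq_univ_of_forall fun x ↦ mem_iUnion.2 (exists_nat_ge (g x))

section Laplace

variable {X : Type*} [MeasurableSpace X] {ν : Measure X} {g : X → ℝ} {a : ℝ}

lemma lintegral_exp_neg_mul_eq_lintegral_measure_le [SFinite ν] (hg : Measurable g)
    (hg₀ : ∀ x, 0 ≤ g x) (ha : 0 < a) :
    ∫⁻ x, ENNReal.ofReal (Real.exp (-(a * g x))) ∂ν =
      ∫⁻ t in Ici 0, ENNReal.ofReal (a * Real.exp (-(a * t))) * ν {x | g x ≤ t} := by
  let k (x : X) : ℝ → ℝ≥0∞ :=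
    (Ici (g x)).indicator fun t ↦ ENNReal.ofReal (a * Real.exp (-(a * t)))
  have hk : Measurable (Function.uncurry k) :=
    Measurable.indicator (f := fun p : X × ℝ ↦ ENNReal.ofReal (a * Real.exp (-(a * p.2))))
      (by fun_prop) (measurableSet_le (hg.comp measurable_fst) measurable_snd)
  calc ∫⁻ x, ENNReal.ofReal (Real.exp (-(a * g x))) ∂ν
      = ∫⁻ x, ∫⁻ t in Ici 0, k x t ∂volume ∂ν := by
        refine lintegral_congr fun x ↦ ?_
        rw [← lintegral_Ici_mul_exp_neg_mul ha, setLIntegral_indicator measurableSet_Ici,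
          inter_eq_left.2 (Ici_subset_Ici.2 (hg₀ x))]
    _ = ∫⁻ t in Ici 0, ∫⁻ x, k x t ∂ν := lintegral_lintegral_swap hk.aemeasurable
    _ = ∫⁻ t in Ici 0, ENNReal.ofReal (a * Real.exp (-(a * t))) * ν {x | g x ≤ t} := by
        refine lintegral_congr fun t ↦ ?_
        exact lintegral_indicator_const (measurableSet_le hg measurable_const) _

variable {c d : ℝ}

lemma measure_setOf_le_le_mul_one_add_rpow (hc : 0 ≤ c)
    (hν : ∀ r : ℝ, 1 ≤ r → ν {x | g x ≤ r} ≤ ENNReal.ofReal (c * r ^ d)) {t : ℝ} (ht : 0 ≤ t) :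
    ν {x | g x ≤ t} ≤ ENNReal.ofReal (c * (1 + t ^ d)) := by
  have htd : 0 ≤ t ^ d := Real.rpow_nonneg ht d
  rcases le_total t 1 with ht₁ | ht₁
  · calc ν {x | g x ≤ t} ≤ ν {x | g x ≤ 1} := measure_mono fun x hx ↦ le_trans hx ht₁
      _ ≤ ENNReal.ofReal (c * 1 ^ d) := hν 1 le_rfl
      _ ≤ ENNReal.ofReal (c * (1 + t ^ d)) := by
        rw [Real.one_rpow]
        gcongr
        linarith
  · refine (hν t ht₁).trans ?_
    gcongr
    linarith

lemma lintegral_exp_neg_mul_le_of_measure_le_rpow (hg : Measurable g) (hg₀ : ∀ x, 0 ≤ g x)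
    (hc : 0 ≤ c) (hd : -1 < d)
    (hν : ∀ r : ℝ, 1 ≤ r → ν {x | g x ≤ r} ≤ ENNReal.ofReal (c * r ^ d)) (ha : 0 < a) :
    ∫⁻ x, ENNReal.ofReal (Real.exp (-(a * g x))) ∂ν ≤
      ENNReal.ofReal (c * (1 + Real.Gamma (d + 1) * a ^ (-d))) := by
  have : SigmaFinite ν := sigmaFinite_of_measure_setOf_le_lt_top fun n ↦
    (measure_setOf_le_le_mul_one_add_rpow hc hν n.cast_nonneg).trans_lt ENNReal.ofReal_lt_top
  calc ∫⁻ x, ENNReal.ofReal (Real.exp (-(a * g x))) ∂ν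
      = ∫⁻ t in Ici 0, ENNReal.ofReal (a * Real.exp (-(a * t))) * ν {x | g x ≤ t} :=
        lintegral_exp_neg_mul_eq_lintegral_measure_le hg hg₀ ha
    _ ≤ ∫⁻ t in Ici 0, ENNReal.ofReal c *
          (ENNReal.ofReal (a * Real.exp (-(a * t))) * ENNReal.ofReal (1 + t ^ d)) := by
        refine setLIntegral_mono' measurableSet_Ici fun t ht ↦ ?_
        rw [mul_left_comm, ← ENNReal.ofReal_mul hc]
        gcongr
        exact measure_setOf_le_le_mul_one_add_rpow hc hν ht
    _ = ENNReal.ofReal (c * (1 + Real.Gamma (d + 1) * a ^ (-d))) := by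
        rw [lintegral_const_mul' _ _ ENNReal.ofReal_ne_top,
          lintegral_Ici_mul_exp_neg_mul_mul_one_add_rpow ha hd, ENNReal.ofReal_mul hc]

lemma lintegral_neg_mul_log_add_le_of_measure_le_rpow (hg : Measurable g) (hg₀ : ∀ x, 0 ≤ g x)
    (hc : 0 ≤ c) (hd : -1 < d)
    (hν : ∀ r : ℝ, 1 ≤ r → ν {x | g x ≤ r} ≤ ENNReal.ofReal (c * r ^ d)) (ha : 0 < a) (b : ℝ)
    {f : X → ℝ} (hf : ∀ x, 0 ≤ f x) :
    ∫⁻ x, ENNReal.ofReal (-(f x * (Real.log (f x) + a * g x + b))) ∂ν ≤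
      ENNReal.ofReal (Real.exp (-b) * (c * (1 + Real.Gamma (d + 1) * a ^ (-d)))) := by
  calc ∫⁻ x, ENNReal.ofReal (-(f x * (Real.log (f x) + a * g x + b))) ∂ν
      ≤ ∫⁻ x, ENNReal.ofReal (Real.exp (-b)) * ENNReal.ofReal (Real.exp (-(a * g x))) ∂ν := by
        refine lintegral_mono fun x ↦ ?_
        rw [← ENNReal.ofReal_mul (Real.exp_nonneg _), ← Real.exp_add, ← neg_add, add_comm b,
          add_assoc]
        exact ENNReal.ofReal_le_ofReal (neg_mul_log_add_le_exp_neg (hf x) _)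
    _ = ENNReal.ofReal (Real.exp (-b)) * ∫⁻ x, ENNReal.ofReal (Real.exp (-(a * g x))) ∂ν :=
        lintegral_const_mul' _ _ ENNReal.ofReal_ne_top
    _ ≤ ENNReal.ofReal (Real.exp (-b) * (c * (1 + Real.Gamma (d + 1) * a ^ (-d)))) := by
        rw [ENNReal.ofReal_mul (Real.exp_nonneg _)]
        gcongr
        exact lintegral_exp_neg_mul_le_of_measure_le_rpow hg hg₀ hc hd hν ha

end Laplace

lemma tsum_neg_mul_log_add_le_of_tsum_le_rpow {V : Type*} {g w : V → ℝ} {a c d : ℝ}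
    (hg : ∀ y, 0 ≤ g y) (hc : 0 ≤ c) (hd : -1 < d)
    (hgrowth : ∀ r : ℝ, 1 ≤ r →
      ∑' y, (if g y ≤ r then ENNReal.ofReal (w y) else 0) ≤ ENNReal.ofReal (c * r ^ d))
    (ha : 0 < a) (b : ℝ) {f : V → ℝ} (hf : ∀ y, 0 ≤ f y) :
    ∑' y, ENNReal.ofReal (-(f y * (Real.log (f y) + a * g y + b))) * ENNReal.ofReal (w y) ≤
      ENNReal.ofReal (Real.exp (-b) * (c * (1 + Real.Gamma (d + 1) * a ^ (-d)))) := by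
  let _ : MeasurableSpace V := ⊤
  let ν : Measure V := Measure.count.withDensity fun y ↦ ENNReal.ofReal (w y)
  have hν (r : ℝ) (hr : 1 ≤ r) : ν {y | g y ≤ r} ≤ ENNReal.ofReal (c * r ^ d) := by
    refine le_of_eq_of_le ?_ (hgrowth r hr)
    rw [withDensity_apply _ .of_discrete, ← lintegral_indicator .of_discrete, lintegral_count]
    rfl
  have h := lintegral_neg_mul_log_add_le_of_measure_le_rpow measurable_from_top hg hc hd hν ha b hf
  rw [lintegral_withDensity_eq_lintegral_mul _ measurable_from_top measurable_from_top,
    lintegral_count] at h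
  simpa only [Pi.mul_apply, mul_comm] using h

theorem stmt_5_general {V : Type*} {g w : V → ℝ} {a A c d : ℝ} (hg : ∀ y, 0 ≤ g y)
    (hw : ∀ y, 0 ≤ w y) (hc : 0 ≤ c) (hd : 0 ≤ d)
    (hgrowth : ∀ r : ℝ, 1 ≤ r →
      ∑' y, (if g y ≤ r then ENNReal.ofReal (w y) else 0) ≤ ENNReal.ofReal (c * r ^ d))
    (ha : 0 < a) (haA : a ≤ A) (b : ℝ) {f : V → ℝ} (hf : ∀ y, 0 ≤ f y) :
    ∑' y, ENNReal.ofReal (max 0 (-(f y * (Real.log (f y) + a * g y + b))) * w y) ≤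
        ENNReal.ofReal (c * (A ^ d + Real.Gamma (d + 1)) * Real.exp (-b) * a ^ (-d)) ∧
      (Summable (fun y ↦ f y * (Real.log (f y) + a * g y + b) * w y) →
        -(c * (A ^ d + Real.Gamma (d + 1)) * Real.exp (-b) * a ^ (-d)) ≤
          ∑' y, f y * (Real.log (f y) + a * g y + b) * w y) := by
  set K := c * (A ^ d + Real.Gamma (d + 1)) * Real.exp (-b) * a ^ (-d)
  have hA : 0 < A := ha.trans_le haA
  have hK : Real.exp (-b) * (c * (1 + Real.Gamma (d + 1) * a ^ (-d))) ≤ K := by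
    have hone : 1 ≤ A ^ d * a ^ (-d) := by
      rw [Real.rpow_neg ha.le, ← div_eq_mul_inv, one_le_div (by positivity)]
      gcongr
    calc Real.exp (-b) * (c * (1 + Real.Gamma (d + 1) * a ^ (-d)))
        ≤ Real.exp (-b) * (c * (A ^ d * a ^ (-d) + Real.Gamma (d + 1) * a ^ (-d))) := by gcongr
      _ = K := by ring
  have hsum : ∑' y, ENNReal.ofReal (-(f y * (Real.log (f y) + a * g y + b))) *
      ENNReal.ofReal (w y) ≤ ENNReal.ofReal K :=
    (tsum_neg_mul_log_add_le_of_tsum_le_rpow hg hc (by linarith) hgrowth ha b hf).trans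
      (ENNReal.ofReal_le_ofReal hK)
  refine ⟨?_, fun hs ↦ ?_⟩
  · simpa only [ENNReal.ofReal_mul (le_max_left _ _), ENNReal.ofReal_max, ENNReal.ofReal_zero,
      zero_le, max_eq_right] using hsum
  · rw [neg_le, ← tsum_neg]
    refine tsum_le_of_tsum_ofReal_le hs.neg (by positivity) ?_
    simpa only [← neg_mul _ (w _), ENNReal.ofReal_mul' (hw _)] using hsum

/-- There is a constant `C`, depending only on `cG` and `d`, such that for
every `x`, every `a ∈ (0,2]`, every `b ∈ ℝ` and every nonnegative `f : V → ℝ`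
(with `0 · log 0 = 0`, which holds automatically since `Real.log 0 = 0`),
`∑_y max(0, −f(y)(log f(y) + a ρ(x,y) + b)) μ_y ≤ C e^{−b} a^{−d}`.
Consequently, whenever `∑_y f(y)(log f(y) + a ρ(x,y) + b) μ_y` is summable,
it is bounded below by `−C e^{−b} a^{−d}`. -/
theorem stmt_5
    (cG d : ℝ) (hcG : 1 ≤ cG) (hd : 0 < d) :
    ∃ C : ℝ, 0 < C ∧
      ∀ (V : Type) [Countable V] (ρ : V → V → ℝ)
        (_hρ_self : ∀ x : V, ρ x x = 0)
        (_hρ_symm : ∀ x y : V, ρ x y = ρ y x)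
        (_hρ_tri : ∀ x y z : V, ρ x z ≤ ρ x y + ρ y z)
        (_hρ_sep : ∀ x y : V, x ≠ y → 1 ≤ ρ x y)
        (μ : V → ℝ) (cM : ℝ) (_hcM : 1 ≤ cM)
        (_hμ : ∀ x : V, cM⁻¹ ≤ μ x ∧ μ x ≤ cM)
        (_hupper : ∀ (x : V) (r : ℝ), 1 ≤ r →
          (∑' y : V, if ρ x y ≤ r then ENNReal.ofReal (μ y) else 0)
            ≤ ENNReal.ofReal (cG * r ^ d)),
        ∀ (x : V) (a b : ℝ) (f : V → ℝ), 0 < a → a ≤ 2 → (∀ y, 0 ≤ f y) →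
          ((∑' y : V,
              ENNReal.ofReal
                (max 0 (-(f y * (Real.log (f y) + a * ρ x y + b))) * μ y))
            ≤ ENNReal.ofReal (C * Real.exp (-b) * a ^ (-d))) ∧
          (Summable (fun y : V => f y * (Real.log (f y) + a * ρ x y + b) * μ y) →
            -(C * Real.exp (-b) * a ^ (-d))
              ≤ ∑' y : V, f y * (Real.log (f y) + a * ρ x y + b) * μ y) := by
  refine ⟨cG * (2 ^ d + Real.Gamma (d + 1)), by positivity, ?_⟩
  intro V _ ρ hself hsymm htri _ μ cM hcM hμ hupper x a b f ha ha₂ hf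
  have hρ (y : V) : 0 ≤ ρ x y := by linarith [hself x, hsymm x y, htri x y x]
  have hμ₀ (y : V) : 0 ≤ μ y := (inv_nonneg.2 (by linarith)).trans (hμ y).1
  exact stmt_5_general hρ hμ₀ (by linarith) hd.le (hupper x) ha ha₂ b hf
end

section
/- Let x ∈ V, r0 ≥ 1 and c > 0, and suppose that Σ_{y∈V : ρ(x,y) ≤ s} w_{x,y} ≤ c·s^d for every real s ≥ r0. Then there exists a constant C, depending only on c, d and α, such that for every r ≥ r0, Σ_{y∈V : ρ(x,y) > r} w_{x,y} · ρ(x,y)^{−(d+α)} ≤ C·r^{−α}. -/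
open scoped ENNReal
open Classical

/-!
Cut the tail `{r < f}` into the dyadic shells `2 ^ k * r ≤ f < 2 ^ (k + 1) * r`. On the `k`-th
shell `f ^ (-β)` is at most `(2 ^ k * r) ^ (-β)`, and the shell has mass at most
`c * (2 ^ (k + 1) * r) ^ d`, so it contributes at most
`c * 2 ^ d * r ^ (d - β) * (2 ^ (d - β)) ^ k`. For `d < β` these bounds form a convergent
geometric series. The theorem is the case `β = d + α` for the measure with mass `w x y` at each
`y` and `f = ρ x`.
-/

section TailBound

open MeasureTheory Set

theorem setOf_lt_subset_iUnion_dyadic_shells {X : Type*} (f : X → ℝ) {r : ℝ} (hr : 0 < r) :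
    {x | r < f x} ⊆ ⋃ k : ℕ, {x | 2 ^ k * r ≤ f x ∧ f x < 2 ^ (k + 1) * r} := by
  intro x (hx : r < f x)
  obtain ⟨k, hlower, hupper⟩ := exists_nat_pow_near ((one_le_div hr).2 hx.le) one_lt_two
  exact mem_iUnion.2 ⟨k, (le_div_iff₀ hr).1 hlower, (div_lt_iff₀ hr).1 hupper⟩

theorem setLIntegral_comp_le_tsum_dyadic_of_antitoneOn {X : Type*} [MeasurableSpace X]
    (μ : Measure X) (f : X → ℝ) {φ : ℝ → ℝ≥0∞} {r : ℝ} (hr : 0 < r) (hφ : AntitoneOn φ (Ici r)) :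
    ∫⁻ x in {x | r < f x}, φ (f x) ∂μ
      ≤ ∑' k : ℕ, φ (2 ^ k * r) * μ {x | f x ≤ 2 ^ (k + 1) * r} := by
  let shell (k : ℕ) : Set X := {x | 2 ^ k * r ≤ f x ∧ f x < 2 ^ (k + 1) * r}
  have shell_le (k : ℕ) :
      ∫⁻ x in shell k, φ (f x) ∂μ ≤ φ (2 ^ k * r) * μ {x | f x ≤ 2 ^ (k + 1) * r} := by
    have hrk : r ≤ 2 ^ k * r := le_mul_of_one_le_left hr.le (one_le_pow₀ one_le_two)
    calc ∫⁻ x in shell k, φ (f x) ∂μ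
        ≤ ∫⁻ _ in shell k, φ (2 ^ k * r) ∂μ :=
          setLIntegral_mono measurable_const fun x hx => hφ hrk (hrk.trans hx.1) hx.1
      _ = φ (2 ^ k * r) * μ (shell k) := setLIntegral_const _ _
      _ ≤ φ (2 ^ k * r) * μ {x | f x ≤ 2 ^ (k + 1) * r} := by
          gcongr
          exact fun x hx => hx.2.le
  calc ∫⁻ x in {x | r < f x}, φ (f x) ∂μ
      ≤ ∫⁻ x in ⋃ k, shell k, φ (f x) ∂μ :=
        lintegral_mono_set (setOf_lt_subset_iUnion_dyadic_shells f hr)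
    _ ≤ ∑' k, ∫⁻ x in shell k, φ (f x) ∂μ := lintegral_iUnion_le _ _
    _ ≤ ∑' k : ℕ, φ (2 ^ k * r) * μ {x | f x ≤ 2 ^ (k + 1) * r} := ENNReal.tsum_le_tsum shell_le

/-- The constant in the tail bound for mass growing like `s ^ d` against the decay `s ^ (-β)`:
`2 ^ d` times the sum of the geometric series of ratio `2 ^ (d - β)`, meaningful for `d < β`. -/
noncomputable def dyadicTailConst (d β : ℝ) : ℝ :=
  2 ^ d * (1 - 2 ^ (d - β))⁻¹

theorem two_rpow_sub_lt_one {d β : ℝ} (hdβ : d < β) : (2 : ℝ) ^ (d - β) < 1 :=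
  Real.rpow_lt_one_of_one_lt_of_neg one_lt_two (sub_neg.2 hdβ)

theorem dyadicTailConst_pos {d β : ℝ} (hdβ : d < β) : 0 < dyadicTailConst d β :=
  mul_pos (by positivity) (inv_pos.2 (sub_pos.2 (two_rpow_sub_lt_one hdβ)))

theorem dyadic_rpow_neg_mul_rpow (d β : ℝ) {r : ℝ} (hr : 0 < r) (k : ℕ) :
    (2 ^ k * r) ^ (-β) * (2 ^ (k + 1) * r) ^ d
      = 2 ^ d * r ^ (d - β) * (2 ^ (d - β)) ^ k := by
  have hpos : 0 < 2 ^ k * r := by positivity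
  calc (2 ^ k * r) ^ (-β) * (2 ^ (k + 1) * r) ^ d
      = (2 ^ k * r) ^ (-β) * (2 * (2 ^ k * r)) ^ d := by rw [pow_succ', mul_assoc]
    _ = 2 ^ d * ((2 ^ k * r) ^ d * (2 ^ k * r) ^ (-β)) := by
        rw [Real.mul_rpow zero_le_two hpos.le]
        ring
    _ = 2 ^ d * (2 ^ k * r) ^ (d - β) := by rw [← Real.rpow_add hpos, ← sub_eq_add_neg]
    _ = 2 ^ d * r ^ (d - β) * (2 ^ (d - β)) ^ k := by
        rw [Real.mul_rpow (by positivity) hr.le, ← Real.rpow_pow_comm zero_le_two]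
        ring

theorem tsum_ofReal_dyadic_rpow_neg_mul_rpow {d β r : ℝ} (hdβ : d < β) (hr : 0 < r) :
    ∑' k : ℕ, ENNReal.ofReal ((2 ^ k * r) ^ (-β)) * ENNReal.ofReal ((2 ^ (k + 1) * r) ^ d)
      = ENNReal.ofReal (dyadicTailConst d β * r ^ (d - β)) := by
  have geometric : HasSum (fun k : ℕ => 2 ^ d * r ^ (d - β) * (2 ^ (d - β)) ^ k)
      (2 ^ d * r ^ (d - β) * (1 - 2 ^ (d - β))⁻¹) :=
    (hasSum_geometric_of_lt_one (by positivity) (two_rpow_sub_lt_one hdβ)).mul_left _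
  calc ∑' k : ℕ, ENNReal.ofReal ((2 ^ k * r) ^ (-β)) * ENNReal.ofReal ((2 ^ (k + 1) * r) ^ d)
      = ∑' k : ℕ, ENNReal.ofReal (2 ^ d * r ^ (d - β) * (2 ^ (d - β)) ^ k) :=
        tsum_congr fun k => by
          rw [← ENNReal.ofReal_mul (by positivity), dyadic_rpow_neg_mul_rpow d β hr]
    _ = ENNReal.ofReal (2 ^ d * r ^ (d - β) * (1 - 2 ^ (d - β))⁻¹) := by
        rw [← ENNReal.ofReal_tsum_of_nonneg (fun k => by positivity) geometric.summable,
          geometric.tsum_eq]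
    _ = ENNReal.ofReal (dyadicTailConst d β * r ^ (d - β)) := by
        rw [dyadicTailConst, mul_right_comm]

theorem setLIntegral_rpow_neg_le_of_measure_le_rpow {X : Type*} [MeasurableSpace X]
    {μ : Measure X} {f : X → ℝ} {c : ℝ≥0∞} {d β r : ℝ} (hβ : 0 ≤ β) (hdβ : d < β) (hr : 0 < r)
    (hμ : ∀ s, r ≤ s → μ {x | f x ≤ s} ≤ c * ENNReal.ofReal (s ^ d)) :
    ∫⁻ x in {x | r < f x}, ENNReal.ofReal (f x ^ (-β)) ∂μ
      ≤ c * ENNReal.ofReal (dyadicTailConst d β * r ^ (d - β)) := by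
  have decay : AntitoneOn (fun t : ℝ => ENNReal.ofReal (t ^ (-β))) (Ici r) :=
    fun s hs t _ hst => ENNReal.ofReal_le_ofReal
      (Real.rpow_le_rpow_of_nonpos (hr.trans_le hs) hst (neg_nonpos.2 hβ))
  calc ∫⁻ x in {x | r < f x}, ENNReal.ofReal (f x ^ (-β)) ∂μ
      ≤ ∑' k : ℕ, ENNReal.ofReal ((2 ^ k * r) ^ (-β)) * μ {x | f x ≤ 2 ^ (k + 1) * r} :=
        setLIntegral_comp_le_tsum_dyadic_of_antitoneOn μ f hr decay
    _ ≤ ∑' k : ℕ, ENNReal.ofReal ((2 ^ k * r) ^ (-β))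
          * (c * ENNReal.ofReal ((2 ^ (k + 1) * r) ^ d)) := by
        gcongr with k
        exact hμ _ (le_mul_of_one_le_left hr.le (one_le_pow₀ one_le_two))
    _ = c * ENNReal.ofReal (dyadicTailConst d β * r ^ (d - β)) := by
        simp_rw [mul_left_comm _ c]
        rw [ENNReal.tsum_mul_left, tsum_ofReal_dyadic_rpow_neg_mul_rpow hdβ hr]

theorem setLIntegral_count_withDensity {X : Type*} [MeasurableSpace X]
    [DiscreteMeasurableSpace X] (w g : X → ℝ≥0∞) (p : X → Prop) :
    ∫⁻ x in {x | p x}, g x ∂(Measure.count.withDensity w)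
      = ∑' x, if p x then w x * g x else 0 := by
  rw [setLIntegral_withDensity_eq_setLIntegral_mul _ .of_discrete .of_discrete .of_discrete,
    ← lintegral_indicator .of_discrete, lintegral_count]
  simp only [indicator_apply, mem_ofPred_eq, Pi.mul_apply]

theorem tsum_mul_rpow_neg_le_of_tsum_le_rpow {V : Type*} {w : V → ℝ≥0∞} {f : V → ℝ} {c : ℝ≥0∞}
    {d β r : ℝ} (hβ : 0 ≤ β) (hdβ : d < β) (hr : 0 < r)
    (hball : ∀ s, r ≤ s → (∑' y, if f y ≤ s then w y else 0) ≤ c * ENNReal.ofReal (s ^ d)) :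
    (∑' y, if r < f y then w y * ENNReal.ofReal (f y ^ (-β)) else 0)
      ≤ c * ENNReal.ofReal (dyadicTailConst d β * r ^ (d - β)) := by
  let _ : MeasurableSpace V := ⊤
  rw [← setLIntegral_count_withDensity]
  refine setLIntegral_rpow_neg_le_of_measure_le_rpow hβ hdβ hr fun s hs => ?_
  rw [← setLIntegral_one, setLIntegral_count_withDensity]
  simpa only [mul_one] using hball s hs

end TailBound

theorem stmt_8_general {c d α : ℝ} (hc : 0 < c) (hα : 0 < α) (hdα : 0 ≤ d + α) :
    ∃ C : ℝ, 0 < C ∧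
      ∀ {V : Type*} {f w : V → ℝ} {r : ℝ}, (∀ y, 0 ≤ w y) → 0 < r →
        (∀ s : ℝ, r ≤ s →
          (∑' y, if f y ≤ s then ENNReal.ofReal (w y) else 0) ≤ ENNReal.ofReal (c * s ^ d)) →
        (∑' y, if r < f y then ENNReal.ofReal (w y / f y ^ (d + α)) else 0)
          ≤ ENNReal.ofReal (C * r ^ (-α)) := by
  have hd_lt : d < d + α := lt_add_of_pos_right d hα
  refine ⟨c * dyadicTailConst d (d + α), mul_pos hc (dyadicTailConst_pos hd_lt), ?_⟩
  intro V f w r hw hr hball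
  calc (∑' y, if r < f y then ENNReal.ofReal (w y / f y ^ (d + α)) else 0)
      = ∑' y, if r < f y then ENNReal.ofReal (w y) * ENNReal.ofReal (f y ^ (-(d + α))) else 0 := by
        congr! 3 with y hy
        rw [← ENNReal.ofReal_mul (hw y), Real.rpow_neg (hr.trans hy).le, div_eq_mul_inv]
    _ ≤ ENNReal.ofReal c * ENNReal.ofReal (dyadicTailConst d (d + α) * r ^ (d - (d + α))) := by
        refine tsum_mul_rpow_neg_le_of_tsum_le_rpow hdα hd_lt hr fun s hs => ?_
        simpa only [ENNReal.ofReal_mul hc.le] using hball s hs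
    _ = ENNReal.ofReal (c * dyadicTailConst d (d + α) * r ^ (-α)) := by
        rw [← ENNReal.ofReal_mul hc.le, sub_add_cancel_left, mul_assoc]

/-- Tail estimate: if `∑_{y : ρ(x,y) ≤ s} w_{x,y} ≤ c s^d` for all `s ≥ r0`,
then `∑_{y : ρ(x,y) > r} w_{x,y} ρ(x,y)^{−(d+α)} ≤ C r^{−α}` for all `r ≥ r0`,
with `C` depending only on `c, d, α`. -/
theorem stmt_8
    (c d α : ℝ) (hc : 0 < c) (hd : 0 < d) (hα0 : 0 < α) (hα2 : α < 2) :
    ∃ C : ℝ, 0 < C ∧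
      ∀ (V : Type) [Countable V] (ρ : V → V → ℝ)
        (_hρ_self : ∀ x : V, ρ x x = 0)
        (_hρ_symm : ∀ x y : V, ρ x y = ρ y x)
        (_hρ_tri : ∀ x y z : V, ρ x z ≤ ρ x y + ρ y z)
        (_hρ_sep : ∀ x y : V, x ≠ y → 1 ≤ ρ x y)
        (w : V → V → ℝ)
        (_hw_nonneg : ∀ x y : V, 0 ≤ w x y)
        (_hw_symm : ∀ x y : V, w x y = w y x)
        (_hw_diag : ∀ x : V, w x x = 0)
        (x : V) (r0 : ℝ) (_hr0 : 1 ≤ r0)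
        (_hball : ∀ s : ℝ, r0 ≤ s →
          (∑' y : V, if ρ x y ≤ s then ENNReal.ofReal (w x y) else 0)
            ≤ ENNReal.ofReal (c * s ^ d)),
        ∀ r : ℝ, r0 ≤ r →
          (∑' y : V, if r < ρ x y then ENNReal.ofReal (w x y / ρ x y ^ (d + α)) else 0)
            ≤ ENNReal.ofReal (C * r ^ (-α)) := by
  obtain ⟨C, hC, tail_le⟩ := stmt_8_general hc hα0 (add_pos hd hα0).le
  exact ⟨C, hC, fun V _ ρ _ _ _ _ w hw _ _ x r0 hr0 hball r hr =>
    tail_le (hw x) (by linarith) fun s hs => hball s (hr.trans hs)⟩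
end

section
/- Let x ∈ V, r0 ≥ 2 and c_1 > 0, and suppose that (i) Σ_{y∈V : y ≠ x, ρ(x,y) ≤ r0} w_{x,y} · ρ(x,y)^{−(d+α−2)} ≤ c_1·r0^{2−α}, and (ii) Σ_{y∈V : ρ(x,y) ≤ s} w_{x,y} ≤ c_1·s^d for every real s ≥ r0/2. Then there exists a constant C, depending only on c_1, d and α, such that for every r ≥ r0, Σ_{y∈V : y ≠ x, ρ(x,y) ≤ r} w_{x,y} · ρ(x,y)^{−(d+α−2)} ≤ C·r^{2−α}. -/
open scoped ENNReal
open Classical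

/-!
Let `ρ` be the distance to the base point and `p = -(d + α - 2)`. Passing from radius `r / 2` to
radius `r` adds an annulus, on which `ρ ^ p` is comparable to `r ^ p`; by the growth hypothesis the
annulus contributes at most a multiple of `r ^ (d + p)`. Since `d + p = 2 - α > 0`, these
contributions, added over the dyadic radii between `r₀` and `r`, form a geometric sum comparable to
its largest term.
-/

section TruncatedMoment

open MeasureTheory Set

theorem rpow_le_rpow_abs_mul_rpow {t r k : ℝ} (p : ℝ) (ht : 0 < t) (htr : t ≤ r)
    (hrt : r ≤ k * t) : t ^ p ≤ k ^ |p| * r ^ p := by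
  have hr : 0 < r := ht.trans_le htr
  have hone_le : 1 ≤ r / t := (one_le_div ht).2 htr
  have hratio : t ^ p / r ^ p ≤ k ^ |p| :=
    calc t ^ p / r ^ p = (r / t) ^ (-p) := by
          rw [Real.rpow_neg (by positivity), Real.div_rpow hr.le ht.le, inv_div]
      _ ≤ (r / t) ^ |p| := Real.rpow_le_rpow_of_exponent_le hone_le (neg_le_abs p)
      _ ≤ k ^ |p| := by
          gcongr
          exact (div_le_iff₀ ht).2 hrt
  exact (div_le_iff₀ (by positivity)).1 hratio

theorem ofReal_mul_ofReal_inv_one_sub_add_one {q : ℝ} (hq₀ : 0 ≤ q) (hq₁ : q < 1) :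
    ENNReal.ofReal q * ENNReal.ofReal (1 - q)⁻¹ + 1 = ENNReal.ofReal (1 - q)⁻¹ := by
  have hsub : 0 < 1 - q := sub_pos.2 hq₁
  have hreal : q * (1 - q)⁻¹ + 1 = (1 - q)⁻¹ := by
    field_simp
    ring
  rw [← ENNReal.ofReal_mul hq₀, ← ENNReal.ofReal_one,
    ← ENNReal.ofReal_add (by positivity) zero_le_one, hreal]

theorem ofReal_half_rpow {r : ℝ} (hr : 0 ≤ r) (γ : ℝ) :
    ENNReal.ofReal ((r / 2) ^ γ) = ENNReal.ofReal (2 ^ (-γ)) * ENNReal.ofReal (r ^ γ) := by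
  rw [← ENNReal.ofReal_mul (by positivity), Real.div_rpow hr two_pos.le, div_eq_inv_mul,
    ← Real.rpow_neg two_pos.le]

theorem le_mul_rpow_of_le_add_of_le_two_mul {F : ℝ → ℝ≥0∞} {A B : ℝ≥0∞} {r₀ γ : ℝ}
    (hr₀ : 0 < r₀) (hγ : 0 < γ) (hF₀ : F r₀ ≤ A * ENNReal.ofReal (r₀ ^ γ))
    (hF : ∀ s r, r₀ ≤ s → s ≤ r → r ≤ 2 * s → F r ≤ F s + B * ENNReal.ofReal (r ^ γ))
    {r : ℝ} (hr : r₀ ≤ r) :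
    F r ≤ (A + B * ENNReal.ofReal (1 - 2 ^ (-γ))⁻¹) * ENNReal.ofReal (r ^ γ) := by
  set q : ℝ := 2 ^ (-γ)
  set K : ℝ≥0∞ := ENNReal.ofReal (1 - q)⁻¹
  have hq_pos : 0 < q := by positivity
  have hq_lt : q < 1 := Real.rpow_lt_one_of_one_lt_of_neg one_lt_two (neg_lt_zero.2 hγ)
  have hK : ENNReal.ofReal q * K + 1 = K :=
    ofReal_mul_ofReal_inv_one_sub_add_one hq_pos.le hq_lt
  obtain ⟨n, hn_le, hn_lt⟩ := exists_nat_pow_near ((one_le_div hr₀).2 hr) one_lt_two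
  rw [le_div_iff₀ hr₀] at hn_le
  rw [div_lt_iff₀ hr₀] at hn_lt
  induction n generalizing r with
  | zero =>
    have hr_le : r ≤ 2 * r₀ := by simpa using hn_lt.le
    have hK_one : 1 ≤ K := hK ▸ le_add_self
    calc F r ≤ F r₀ + B * ENNReal.ofReal (r ^ γ) := hF r₀ r le_rfl hr hr_le
      _ ≤ A * ENNReal.ofReal (r ^ γ) + B * K * ENNReal.ofReal (r ^ γ) := by
          gcongr
          · exact hF₀.trans (by gcongr)
          · exact le_mul_of_one_le_right' hK_one
      _ = (A + B * K) * ENNReal.ofReal (r ^ γ) := (add_mul _ _ _).symm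
  | succ n ih =>
    have hhalf_ge : 2 ^ n * r₀ ≤ r / 2 := by rw [pow_succ] at hn_le; linarith
    have hhalf_lt : r / 2 < 2 ^ (n + 1) * r₀ := by rw [pow_succ _ (n + 1)] at hn_lt; linarith
    have hr₀_le : r₀ ≤ r / 2 :=
      (le_mul_of_one_le_left hr₀.le (one_le_pow₀ one_le_two)).trans hhalf_ge
    calc F r ≤ F (r / 2) + B * ENNReal.ofReal (r ^ γ) :=
          hF (r / 2) r hr₀_le (by linarith) (by linarith)
      _ ≤ (A + B * K) * (ENNReal.ofReal q * ENNReal.ofReal (r ^ γ)) +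
            B * ENNReal.ofReal (r ^ γ) := by
          rw [← ofReal_half_rpow (hr₀.le.trans hr)]
          gcongr
          exact ih hr₀_le hhalf_ge hhalf_lt
      _ = (A * ENNReal.ofReal q + B * (ENNReal.ofReal q * K + 1)) *
            ENNReal.ofReal (r ^ γ) := by ring
      _ ≤ (A + B * K) * ENNReal.ofReal (r ^ γ) := by
          rw [hK]
          gcongr
          exact mul_le_of_le_one_right' (ENNReal.ofReal_le_one.2 hq_lt.le)

variable {X : Type*} [MeasurableSpace X]

/-- The moment `∫ ρ ^ p dμ` truncated to `{0 < ρ ≤ r}`, where `ρ` stands for the distance to a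
base point. -/
noncomputable def truncatedMoment (μ : Measure X) (ρ : X → ℝ) (p r : ℝ) : ℝ≥0∞ :=
  ∫⁻ y in ρ ⁻¹' Ioc 0 r, ENNReal.ofReal (ρ y ^ p) ∂μ

theorem truncatedMoment_le_add {μ : Measure X} {ρ : X → ℝ} (hρ : Measurable ρ) (p : ℝ) {s r : ℝ}
    (hs : 0 < s) (hsr : s ≤ r) (hrs : r ≤ 2 * s) :
    truncatedMoment μ ρ p r ≤
      truncatedMoment μ ρ p s + ENNReal.ofReal (2 ^ |p| * r ^ p) * μ (ρ ⁻¹' Ioc 0 r) := by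
  have hannulus : ∫⁻ y in ρ ⁻¹' Ioc s r, ENNReal.ofReal (ρ y ^ p) ∂μ ≤
      ENNReal.ofReal (2 ^ |p| * r ^ p) * μ (ρ ⁻¹' Ioc 0 r) :=
    calc _ ≤ ∫⁻ _ in ρ ⁻¹' Ioc s r, ENNReal.ofReal (2 ^ |p| * r ^ p) ∂μ := by
          refine setLIntegral_mono' (hρ measurableSet_Ioc) fun y hy => ?_
          exact ENNReal.ofReal_le_ofReal <|
            rpow_le_rpow_abs_mul_rpow p (hs.trans hy.1) hy.2 (by linarith [hy.1])
      _ = ENNReal.ofReal (2 ^ |p| * r ^ p) * μ (ρ ⁻¹' Ioc s r) := setLIntegral_const _ _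
      _ ≤ ENNReal.ofReal (2 ^ |p| * r ^ p) * μ (ρ ⁻¹' Ioc 0 r) := by gcongr
  calc truncatedMoment μ ρ p r
      ≤ truncatedMoment μ ρ p s + ∫⁻ y in ρ ⁻¹' Ioc s r, ENNReal.ofReal (ρ y ^ p) ∂μ := by
        rw [truncatedMoment, ← Ioc_union_Ioc_eq_Ioc hs.le hsr, preimage_union]
        exact lintegral_union_le _ _ _
    _ ≤ _ := by gcongr

theorem truncatedMoment_le_mul_rpow {μ : Measure X} {ρ : X → ℝ} (hρ : Measurable ρ)
    {A B : ℝ≥0∞} {d p r₀ : ℝ} (hdp : 0 < d + p) (hr₀ : 0 < r₀)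
    (hmoment : truncatedMoment μ ρ p r₀ ≤ A * ENNReal.ofReal (r₀ ^ (d + p)))
    (hgrowth : ∀ s, r₀ ≤ s → μ (ρ ⁻¹' Ioc 0 s) ≤ B * ENNReal.ofReal (s ^ d))
    {r : ℝ} (hr : r₀ ≤ r) :
    truncatedMoment μ ρ p r ≤
      (A + B * ENNReal.ofReal (2 ^ |p|) * ENNReal.ofReal (1 - 2 ^ (-(d + p)))⁻¹) *
        ENNReal.ofReal (r ^ (d + p)) := by
  refine le_mul_rpow_of_le_add_of_le_two_mul hr₀ hdp hmoment (fun s r hs hsr hrs => ?_) hr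
  have hs_pos : 0 < s := hr₀.trans_le hs
  have hr_pos : 0 < r := hs_pos.trans_le hsr
  calc truncatedMoment μ ρ p r
      ≤ truncatedMoment μ ρ p s + ENNReal.ofReal (2 ^ |p| * r ^ p) * μ (ρ ⁻¹' Ioc 0 r) :=
        truncatedMoment_le_add hρ p hs_pos hsr hrs
    _ ≤ truncatedMoment μ ρ p s +
          ENNReal.ofReal (2 ^ |p| * r ^ p) * (B * ENNReal.ofReal (r ^ d)) := by
        gcongr
        exact hgrowth r (hs.trans hsr)
    _ = truncatedMoment μ ρ p s +
          B * ENNReal.ofReal (2 ^ |p|) * ENNReal.ofReal (r ^ (d + p)) := by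
        rw [Real.rpow_add hr_pos, ENNReal.ofReal_mul (by positivity),
          ENNReal.ofReal_mul (by positivity)]
        ring

theorem setLIntegral_sum_smul_dirac [MeasurableSingletonClass X] (w f : X → ℝ≥0∞) {s : Set X}
    (hs : MeasurableSet s) :
    ∫⁻ y in s, f y ∂(Measure.sum fun y => w y • Measure.dirac y) =
      ∑' y, if y ∈ s then w y * f y else 0 := by
  simp [← lintegral_indicator hs, lintegral_sum_measure, indicator_apply]

theorem sum_smul_dirac_apply_eq_tsum_ite [MeasurableSingletonClass X] (w : X → ℝ≥0∞) {s : Set X}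
    (hs : MeasurableSet s) :
    Measure.sum (fun y => w y • Measure.dirac y) s = ∑' y, if y ∈ s then w y else 0 := by
  simpa only [setLIntegral_one, mul_one] using
    setLIntegral_sum_smul_dirac w (fun _ => 1) hs

theorem truncatedMoment_sum_smul_dirac [MeasurableSingletonClass X] {w ρ : X → ℝ}
    (hw : ∀ y, 0 ≤ w y) (hρ : Measurable ρ) (p r : ℝ) :
    truncatedMoment (Measure.sum fun y => ENNReal.ofReal (w y) • Measure.dirac y) ρ p r =
      ∑' y, if 0 < ρ y ∧ ρ y ≤ r then ENNReal.ofReal (w y * ρ y ^ p) else 0 := by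
  simp only [truncatedMoment, setLIntegral_sum_smul_dirac _ _ (hρ measurableSet_Ioc),
    mem_preimage, mem_Ioc, ENNReal.ofReal_mul (hw _)]

theorem stmt_9_general (c1 d α : ℝ) (hc1 : 0 < c1) (hα2 : α < 2) :
    ∃ C : ℝ, 0 < C ∧
      ∀ (V : Type*) (x : V) (ρ w : V → ℝ) (r0 : ℝ),
        (∀ y, 0 < ρ y ↔ y ≠ x) → (∀ y, 0 ≤ w y) → 0 < r0 →
        (∑' y, if y ≠ x ∧ ρ y ≤ r0 then
            ENNReal.ofReal (w y / ρ y ^ (d + α - 2)) else 0)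
          ≤ ENNReal.ofReal (c1 * r0 ^ (2 - α)) →
        (∀ s, r0 ≤ s →
          (∑' y, if ρ y ≤ s then ENNReal.ofReal (w y) else 0) ≤ ENNReal.ofReal (c1 * s ^ d)) →
        ∀ r, r0 ≤ r →
          (∑' y, if y ≠ x ∧ ρ y ≤ r then
              ENNReal.ofReal (w y / ρ y ^ (d + α - 2)) else 0)
            ≤ ENNReal.ofReal (C * r ^ (2 - α)) := by
  set p : ℝ := -(d + α - 2) with hp
  have hdp : d + p = 2 - α := by rw [hp]; ring
  have hsum_pos : 0 < d + p := by rw [hdp]; linarith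
  set K : ℝ := (1 - 2 ^ (-(d + p)))⁻¹
  have hK_pos : 0 < K := inv_pos.2 <| sub_pos.2 <|
    Real.rpow_lt_one_of_one_lt_of_neg one_lt_two (neg_lt_zero.2 hsum_pos)
  refine ⟨c1 + c1 * 2 ^ |p| * K, by positivity, ?_⟩
  intro V x ρ w r0 hρ hw hr0 hmoment hgrowth r hr
  let _ : MeasurableSpace V := ⊤
  set μ : Measure V := Measure.sum fun y => ENNReal.ofReal (w y) • Measure.dirac y
  have hmoment_eq : ∀ s, truncatedMoment μ ρ p s = ∑' y, if y ≠ x ∧ ρ y ≤ s then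
      ENNReal.ofReal (w y / ρ y ^ (d + α - 2)) else 0 := fun s => by
    rw [truncatedMoment_sum_smul_dirac hw measurable_from_top]
    refine tsum_congr fun y => if_ctx_congr (and_congr_left' (hρ y)) (fun hy => ?_) fun _ => rfl
    rw [Real.rpow_neg ((hρ y).2 hy.1).le, div_eq_mul_inv]
  have hmass_eq : ∀ s, μ (ρ ⁻¹' Iic s) = ∑' y, if ρ y ≤ s then ENNReal.ofReal (w y) else 0 :=
    fun s => sum_smul_dirac_apply_eq_tsum_ite _ MeasurableSpace.measurableSet_top
  have hconst : ENNReal.ofReal (c1 + c1 * 2 ^ |p| * K) = ENNReal.ofReal c1 +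
      ENNReal.ofReal c1 * ENNReal.ofReal (2 ^ |p|) * ENNReal.ofReal K := by
    rw [ENNReal.ofReal_add hc1.le (by positivity), ENNReal.ofReal_mul (by positivity),
      ENNReal.ofReal_mul hc1.le]
  rw [← hmoment_eq] at hmoment ⊢
  rw [ENNReal.ofReal_mul hc1.le, ← hdp] at hmoment
  rw [ENNReal.ofReal_mul (by positivity), hconst, ← hdp]
  refine truncatedMoment_le_mul_rpow measurable_from_top hsum_pos hr0 hmoment (fun s hs => ?_) hr
  calc μ (ρ ⁻¹' Ioc 0 s) ≤ μ (ρ ⁻¹' Iic s) := measure_mono (preimage_mono Ioc_subset_Iic_self)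
    _ ≤ ENNReal.ofReal c1 * ENNReal.ofReal (s ^ d) := by
        rw [hmass_eq, ← ENNReal.ofReal_mul hc1.le]
        exact hgrowth s hs

end TruncatedMoment

/-- Local moment estimate: if (i) `∑_{0<ρ(x,y)≤r0} w_{x,y} ρ(x,y)^{−(d+α−2)} ≤
c₁ r0^{2−α}` and (ii) `∑_{ρ(x,y)≤s} w_{x,y} ≤ c₁ s^d` for every `s ≥ r0/2`,
then `∑_{0<ρ(x,y)≤r} w_{x,y} ρ(x,y)^{−(d+α−2)} ≤ C r^{2−α}` for every `r ≥ r0`,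
with `C` depending only on `c₁, d, α`. -/
theorem stmt_9
    (c1 d α : ℝ) (hc1 : 0 < c1) (hd : 0 < d) (hα0 : 0 < α) (hα2 : α < 2) :
    ∃ C : ℝ, 0 < C ∧
      ∀ (V : Type) [Countable V] (ρ : V → V → ℝ)
        (_hρ_self : ∀ x : V, ρ x x = 0)
        (_hρ_symm : ∀ x y : V, ρ x y = ρ y x)
        (_hρ_tri : ∀ x y z : V, ρ x z ≤ ρ x y + ρ y z)
        (_hρ_sep : ∀ x y : V, x ≠ y → 1 ≤ ρ x y)
        (w : V → V → ℝ)
        (_hw_nonneg : ∀ x y : V, 0 ≤ w x y)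
        (_hw_symm : ∀ x y : V, w x y = w y x)
        (_hw_diag : ∀ x : V, w x x = 0)
        (x : V) (r0 : ℝ) (_hr0 : 2 ≤ r0)
        (_hi : (∑' y : V, if y ≠ x ∧ ρ x y ≤ r0 then
              ENNReal.ofReal (w x y / ρ x y ^ (d + α - 2)) else 0)
            ≤ ENNReal.ofReal (c1 * r0 ^ (2 - α)))
        (_hii : ∀ s : ℝ, r0 / 2 ≤ s →
          (∑' y : V, if ρ x y ≤ s then ENNReal.ofReal (w x y) else 0)
            ≤ ENNReal.ofReal (c1 * s ^ d)),
        ∀ r : ℝ, r0 ≤ r →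
          (∑' y : V, if y ≠ x ∧ ρ x y ≤ r then
              ENNReal.ofReal (w x y / ρ x y ^ (d + α - 2)) else 0)
            ≤ ENNReal.ofReal (C * r ^ (2 - α)) := by
  obtain ⟨C, hC, hbound⟩ := stmt_9_general c1 d α hc1 hα2
  refine ⟨C, hC, fun V _ ρ hself _ _ hsep w hw _ _ x r0 hr0 hmoment hgrowth => ?_⟩
  have hpos : ∀ y, 0 < ρ x y ↔ y ≠ x := fun y =>
    ⟨fun hy hyx => hy.ne' (hyx ▸ hself x), fun hyx => one_pos.trans_le (hsep x y hyx.symm)⟩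
  exact hbound V x (ρ x) (w x) r0 hpos (hw x) (by linarith) hmoment
    fun s hs => hgrowth s (by linarith)
end

section
/- Let (Ω, F, P) be a probability space and (w_{x,y})_{x,y∈V_1} a family of nonnegative random variables. Let J_1 : V_1 × V_1 → ℝ satisfy C_1 ≤ J_1(x,y) ≤ C_2 for constants 0 < C_1 ≤ C_2, let θ ∈ (0,1), and let ε_0 ∈ (0, C_1·c_V^{−1}/2). Assume that Σ_{R=1}^{∞} Σ_{x∈V_1 : ρ(0,x) ≤ 6R} Σ_{r=⌈R^θ/2⌉}^{∞} P( | Σ_{y∈V_1 : ρ(x,y) ≤ r} ( w_{x,y} − J_1(x,y) ) | > ε_0·r^d ) < ∞, where the inner sum is over integers r. Then there exist deterministic constants 0 < c_5 ≤ c_6 < ∞, depending only on C_1, C_2, c_V, d and ε_0, such that for P-almost every ω ∈ Ω there is R_1(ω) ≥ 1 with: for every integer R > R_1(ω), every x ∈ V_1 with ρ(0,x) ≤ 6R, and every integer r ≥ R^θ/2, c_5·r^d ≤ Σ_{y∈V_1 : ρ(x,y) ≤ r} w_{x,y}(ω) ≤ c_6·r^d. -/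
open scoped ENNReal
open Classical MeasureTheory

/-!
Call `(R, x, r)` bad if `∑ (w x y - J₁ x y)`, over `y` in the ball of radius `r` around `x`, exceeds
`ε₀ r ^ d` in absolute value. By Borel–Cantelli, applied to all triples at once, almost surely only
finitely many triples in the summation range are bad, so for large `R` there are none. In the
absence of bad triples the total weight of a ball is within `ε₀ r ^ d` of the sum of `J₁ x` over it,
which lies between `C₁ cV⁻¹ r ^ d` and `C₂ cV r ^ d` by the cardinality bounds.
-/

open Filter Set

theorem ae_eventually_cofinite_forall_notMem {Ω α β : Type*} [Countable α] [Countable β]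
    [MeasurableSpace Ω] {μ : Measure Ω} {p : α → β → Prop} [∀ a b, Decidable (p a b)]
    {s : α → β → Set Ω}
    (h : ∑' (a : α) (b : β), (if p a b then μ (s a b) else 0) ≠ ∞) :
    ∀ᵐ ω ∂μ, ∀ᶠ a in cofinite, ∀ b, p a b → ω ∉ s a b := by
  let E : α × β → Set Ω := fun i ↦ if p i.1 i.2 then s i.1 i.2 else ∅
  have hE : ∑' i, μ (E i) ≠ ∞ := by
    simpa only [E, ENNReal.tsum_prod', apply_ite μ, measure_empty] using h
  filter_upwards [ae_finite_setOfPred_mem hE] with ω hfin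
  have hfst : ∀ᶠ a in cofinite, a ∉ Prod.fst '' {i | ω ∈ E i} :=
    (hfin.image Prod.fst).eventually_cofinite_notMem
  filter_upwards [hfst] with a ha b hab hω
  exact ha ⟨(a, b), by simpa only [E, mem_ofPred_eq, if_pos hab] using hω, rfl⟩

theorem exists_one_le_forall_lt_of_eventually_atTop {p : ℕ → Prop} (h : ∀ᶠ n in atTop, p n) :
    ∃ t : ℝ, 1 ≤ t ∧ ∀ n : ℕ, t < n → p n := by
  obtain ⟨N, hN⟩ := eventually_atTop.1 h
  exact ⟨max 1 N, le_max_left _ _,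
    fun n hn ↦ hN n (Nat.cast_le.1 ((le_max_right _ _).trans hn.le))⟩

section FiniteSums

variable {ι : Type*} {s : Set ι}

theorem finsum_mem_mem_Icc_ncard_nsmul {M : Type*} [AddCommMonoid M] [PartialOrder M]
    [IsOrderedAddMonoid M] (hs : s.Finite) {f : ι → M} {a b : M} (hf : ∀ i ∈ s, f i ∈ Icc a b) :
    ∑ᶠ i ∈ s, f i ∈ Icc (s.ncard • a) (s.ncard • b) := by
  rw [finsum_mem_eq_finite_toFinset_sum f hs, ncard_eq_toFinset_card s hs]
  exact ⟨Finset.card_nsmul_le_sum _ _ _ fun i hi ↦ (hf i (hs.mem_toFinset.1 hi)).1,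
    Finset.sum_le_card_nsmul _ _ _ fun i hi ↦ (hf i (hs.mem_toFinset.1 hi)).2⟩

theorem finsum_mem_mem_Icc_mul_of_abs_finsum_mem_sub_le (hs : s.Finite) {f g : ι → ℝ}
    {a b c k v ε : ℝ} (ha : 0 ≤ a) (hb : 0 ≤ b) (hg : ∀ i ∈ s, g i ∈ Icc a b)
    (hcard : (s.ncard : ℝ) ∈ Icc (c * v) (k * v))
    (hfg : |∑ᶠ i ∈ s, (f i - g i)| ≤ ε * v) :
    ∑ᶠ i ∈ s, f i ∈ Icc ((a * c - ε) * v) ((b * k + ε) * v) := by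
  obtain ⟨hg_lower, hg_upper⟩ := finsum_mem_mem_Icc_ncard_nsmul hs hg
  rw [finsum_mem_sub_distrib f g hs] at hfg
  obtain ⟨hfg_lower, hfg_upper⟩ := abs_le.1 hfg
  rw [nsmul_eq_mul, mul_comm] at hg_lower hg_upper
  constructor
  · calc (a * c - ε) * v = a * (c * v) - ε * v := by ring
      _ ≤ a * s.ncard - ε * v := by gcongr; exact hcard.1
      _ ≤ ∑ᶠ i ∈ s, f i := by linarith
  · calc ∑ᶠ i ∈ s, f i ≤ b * s.ncard + ε * v := by linarith
      _ ≤ b * (k * v) + ε * v := by gcongr; exact hcard.2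
      _ = (b * k + ε) * v := by ring

end FiniteSums

theorem stmt_13_general {V Ω : Type*} [Countable V] [MeasurableSpace Ω] {μ : Measure Ω}
    {ρ : V → V → ℝ} {z : V} {w : V → V → Ω → ℝ} {J : V → V → ℝ} {C₁ C₂ cV d θ ε : ℝ} (hC₁ : 0 ≤ C₁)
    (hball : ∀ (x : V) (s : ℝ), 1 ≤ s →
      {y : V | ρ x y ≤ s}.Finite ∧
        cV⁻¹ * s ^ d ≤ ({y : V | ρ x y ≤ s}.ncard : ℝ) ∧
        ({y : V | ρ x y ≤ s}.ncard : ℝ) ≤ cV * s ^ d)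
    (hJ : ∀ x y, C₁ ≤ J x y ∧ J x y ≤ C₂)
    (hsum : (∑' (R : ℕ) (x : V) (r : ℕ),
      if 1 ≤ R ∧ ρ z x ≤ 6 * (R : ℝ) ∧ (R : ℝ) ^ θ / 2 ≤ (r : ℝ) then
        μ {ω | ε * (r : ℝ) ^ d < |∑ᶠ y ∈ {y : V | ρ x y ≤ (r : ℝ)}, (w x y ω - J x y)|}
      else 0) ≠ ∞) :
    ∀ᵐ ω ∂μ, ∀ᶠ R : ℕ in atTop, ∀ x : V, ρ z x ≤ 6 * (R : ℝ) →
      ∀ r : ℕ, (R : ℝ) ^ θ / 2 ≤ (r : ℝ) →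
        (C₁ * cV⁻¹ - ε) * (r : ℝ) ^ d ≤ (∑ᶠ y ∈ {y : V | ρ x y ≤ (r : ℝ)}, w x y ω) ∧
          (∑ᶠ y ∈ {y : V | ρ x y ≤ (r : ℝ)}, w x y ω) ≤ (C₂ * cV + ε) * (r : ℝ) ^ d := by
  have hgood := ae_eventually_cofinite_forall_notMem (μ := μ) (α := ℕ) (β := V × ℕ)
    (p := fun R i ↦ 1 ≤ R ∧ ρ z i.1 ≤ 6 * (R : ℝ) ∧ (R : ℝ) ^ θ / 2 ≤ (i.2 : ℝ))
    (s := fun _ i ↦ {ω | ε * (i.2 : ℝ) ^ d <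
      |∑ᶠ y ∈ {y : V | ρ i.1 y ≤ (i.2 : ℝ)}, (w i.1 y ω - J i.1 y)|})
    (by simpa only [ENNReal.tsum_prod'] using hsum)
  filter_upwards [hgood] with ω hω
  rw [Nat.cofinite_eq_atTop] at hω
  filter_upwards [hω, eventually_ge_atTop 1] with R hR hR_one x hx r hr
  have hr_one : (1 : ℝ) ≤ r := by
    have hR_rpow : 0 < (R : ℝ) ^ θ := Real.rpow_pos_of_pos (by exact_mod_cast hR_one) θ
    exact_mod_cast Nat.cast_pos.1 ((half_pos hR_rpow).trans_le hr)
  obtain ⟨hfin, hcard⟩ := hball x r hr_one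
  exact finsum_mem_mem_Icc_mul_of_abs_finsum_mem_sub_le hfin hC₁
    (hC₁.trans ((hJ x x).1.trans (hJ x x).2)) (fun y _ ↦ hJ x y) hcard
    (not_lt.1 (hR (x, r) ⟨hR_one, hx, hr⟩))

/-- Borel–Cantelli consequence (from the proof of Lemma 5.5): under the
summability of the probabilities `p₂(x,r,ε₀)` over `R ≥ 1`, `x ∈ B(0,6R)` and
integers `r ≥ R^θ/2`, almost surely there are deterministic constants
`0 < c₅ ≤ c₆` (depending only on `C₁, C₂, c_V, d, ε₀`) and a random threshold
`R₁(ω)` such that `c₅ r^d ≤ ∑_{y : ρ(x,y) ≤ r} w_{x,y}(ω) ≤ c₆ r^d` for every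
integer `R > R₁(ω)`, every `x ∈ B(0,6R)` and every integer `r ≥ R^θ/2`. -/
theorem stmt_13
    (C1 C2 cV d θ ε0 : ℝ)
    (hC1 : 0 < C1) (hC12 : C1 ≤ C2) (hcV : 1 ≤ cV) (hd : 0 < d)
    (hθ0 : 0 < θ) (hθ1 : θ < 1) (hε0 : 0 < ε0) (hε0' : ε0 < C1 * cV⁻¹ / 2) :
    ∃ c5 c6 : ℝ, 0 < c5 ∧ c5 ≤ c6 ∧
      ∀ (V1 : Type) [Countable V1] (ρ : V1 → V1 → ℝ)
        (_hρ_self : ∀ x : V1, ρ x x = 0)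
        (_hρ_symm : ∀ x y : V1, ρ x y = ρ y x)
        (_hρ_tri : ∀ x y z : V1, ρ x z ≤ ρ x y + ρ y z)
        (_hρ_sep : ∀ x y : V1, x ≠ y → 1 ≤ ρ x y)
        (z0 : V1)
        (_hball : ∀ (x : V1) (s : ℝ), 1 ≤ s →
          {y : V1 | ρ x y ≤ s}.Finite ∧
            cV⁻¹ * s ^ d ≤ ({y : V1 | ρ x y ≤ s}.ncard : ℝ) ∧
            ({y : V1 | ρ x y ≤ s}.ncard : ℝ) ≤ cV * s ^ d)
        (Ω : Type) [MeasurableSpace Ω] (P : Measure Ω) [IsProbabilityMeasure P]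
        (w : V1 → V1 → Ω → ℝ)
        (_hw_nonneg : ∀ x y ω, 0 ≤ w x y ω)
        (_hw_meas : ∀ x y, Measurable (w x y))
        (J1 : V1 → V1 → ℝ)
        (_hJ : ∀ x y, C1 ≤ J1 x y ∧ J1 x y ≤ C2)
        (_hsum : (∑' (R : ℕ) (x : V1) (r : ℕ),
            if 1 ≤ R ∧ ρ z0 x ≤ 6 * (R : ℝ) ∧ (R : ℝ) ^ θ / 2 ≤ (r : ℝ) then
              P {ω | ε0 * (r : ℝ) ^ d <
                  |∑ᶠ y ∈ {y : V1 | ρ x y ≤ (r : ℝ)}, (w x y ω - J1 x y)|}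
            else 0) ≠ ⊤),
        ∀ᵐ ω ∂P, ∃ R1 : ℝ, 1 ≤ R1 ∧
          ∀ R : ℕ, R1 < (R : ℝ) → ∀ x : V1, ρ z0 x ≤ 6 * (R : ℝ) →
            ∀ r : ℕ, (R : ℝ) ^ θ / 2 ≤ (r : ℝ) →
              c5 * (r : ℝ) ^ d ≤ (∑ᶠ y ∈ {y : V1 | ρ x y ≤ (r : ℝ)}, w x y ω) ∧
                (∑ᶠ y ∈ {y : V1 | ρ x y ≤ (r : ℝ)}, w x y ω) ≤ c6 * (r : ℝ) ^ d := by
  have hcV0 : 0 < cV⁻¹ := inv_pos.2 (one_pos.trans_le hcV)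
  have hmul : C1 * cV⁻¹ ≤ C2 * cV :=
    mul_le_mul hC12 ((inv_le_one_of_one_le₀ hcV).trans hcV) hcV0.le (hC1.le.trans hC12)
  refine ⟨C1 * cV⁻¹ - ε0, C2 * cV + ε0, ?_, by linarith, ?_⟩
  · exact sub_pos.2 (hε0'.trans (half_lt_self (mul_pos hC1 hcV0)))
  · intro V1 _ ρ _ _ _ _ z0 hball Ω _ P _ w _ _ J1 hJ hsum
    filter_upwards [stmt_13_general hC1.le hball hJ hsum] with ω hω
    exact exists_one_le_forall_lt_of_eventually_atTop hω
end

section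
/- Let (Ω, F, P) be a probability space and (w_{x,y})_{x,y∈V_1} a family of nonnegative random variables. Let J_1 : V_1 × V_1 → ℝ satisfy C_1 ≤ J_1(x,y) ≤ C_2 for constants 0 < C_1 ≤ C_2, and let ε_0 ∈ (0, C_1·c_V^{−2}/2). Assume that Σ_{R=1}^{∞} Σ_{r=1}^{R} P( | Σ_{x,y∈V_1 : ρ(0,x) ≤ R, ρ(x,y) ≤ r} ( w_{x,y} − J_1(x,y) ) | > ε_0·r^d·R^d ) < ∞, where R and r range over positive integers. Then there exist deterministic constants 0 < c_1 ≤ c_2 < ∞, depending only on C_1, C_2, c_V, d and ε_0, such that for P-almost every ω ∈ Ω there is R_0(ω) ≥ 1 with: for every integer R > R_0(ω) and every integer 1 ≤ r ≤ R, c_1·r^d·R^d ≤ Σ_{x,y∈V_1 : ρ(0,x) ≤ R, ρ(x,y) ≤ r} w_{x,y}(ω) ≤ c_2·r^d·R^d. -/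
open scoped ENNReal
open Classical MeasureTheory

/-!
Ball regularity, applied first to the ball of radius `R` around `z` and then to the ball of
radius `r` around each of its points, shows that the number of pairs `(x, y)` with `ρ z x ≤ R` and
`ρ x y ≤ r` lies between `c⁻¹ ^ 2 * r ^ d * R ^ d` and `c ^ 2 * r ^ d * R ^ d`, so the sum of
`J ∈ [a, b]` over these pairs is of order `r ^ d * R ^ d`. By Borel–Cantelli, applied to the union
over `r ≤ R` of the deviation events, almost surely the sum of `w` eventually differs from that of
`J` by at most `ε * r ^ d * R ^ d`, simultaneously for all `r ≤ R`.
-/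

section FiniteSums

variable {α β M : Type*}

lemma ncard_nsmul_le_finsum_mem [AddCommMonoid M] [PartialOrder M] [IsOrderedAddMonoid M]
    {s : Set α} (hs : s.Finite) {f : α → M} {a : M} (h : ∀ x ∈ s, a ≤ f x) :
    s.ncard • a ≤ ∑ᶠ x ∈ s, f x := by
  rw [finsum_mem_eq_finite_toFinset_sum f hs, Set.ncard_eq_toFinset_card s hs]
  exact Finset.card_nsmul_le_sum _ _ _ fun x hx => h x (hs.mem_toFinset.1 hx)

lemma finsum_mem_le_ncard_nsmul [AddCommMonoid M] [PartialOrder M] [IsOrderedAddMonoid M]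
    {s : Set α} (hs : s.Finite) {f : α → M} {a : M} (h : ∀ x ∈ s, f x ≤ a) :
    ∑ᶠ x ∈ s, f x ≤ s.ncard • a :=
  ncard_nsmul_le_finsum_mem (M := Mᵒᵈ) hs h

lemma setOf_fst_mem_and_snd_mem_eq_biUnion (A : Set α) (B : α → Set β) :
    {p : α × β | p.1 ∈ A ∧ p.2 ∈ B p.1} = ⋃ x ∈ A, Prod.mk x '' B x := by
  ext ⟨x, y⟩
  simp [and_comm]

lemma finite_setOf_fst_mem_and_snd_mem {A : Set α} {B : α → Set β} (hA : A.Finite)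
    (hB : ∀ x ∈ A, (B x).Finite) : {p : α × β | p.1 ∈ A ∧ p.2 ∈ B p.1}.Finite := by
  rw [setOf_fst_mem_and_snd_mem_eq_biUnion]
  exact hA.biUnion fun x hx => (hB x hx).image _

lemma ncard_setOf_fst_mem_and_snd_mem {A : Set α} {B : α → Set β} (hA : A.Finite)
    (hB : ∀ x ∈ A, (B x).Finite) :
    {p : α × β | p.1 ∈ A ∧ p.2 ∈ B p.1}.ncard = ∑ᶠ x ∈ A, (B x).ncard := by
  have hdisj : A.PairwiseDisjoint fun x => Prod.mk x '' B x := by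
    rintro x - x' - hne
    refine Set.disjoint_left.2 ?_
    rintro _ ⟨y, -, rfl⟩ ⟨y', -, h⟩
    exact hne (congrArg Prod.fst h).symm
  rw [setOf_fst_mem_and_snd_mem_eq_biUnion, hA.ncard_biUnion (fun x hx => (hB x hx).image _) hdisj]
  exact finsum_mem_congr rfl fun x _ => Set.ncard_image_of_injective _ (Prod.mk_right_injective x)

end FiniteSums

section BallRegularity

variable {V : Type*} {ρ : V → V → ℝ} {c d : ℝ}

/-- Ball-cardinality regularity: every ball of radius `s ≥ 1` is finite with cardinality within a
factor `c` of `s ^ d`. Here `ρ` may be any real function of two variables; `d` is the growth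
exponent. -/
def IsBallRegular (ρ : V → V → ℝ) (c d : ℝ) : Prop :=
  ∀ (x : V) (s : ℝ), 1 ≤ s →
    {y : V | ρ x y ≤ s}.Finite ∧
      c⁻¹ * s ^ d ≤ ({y : V | ρ x y ≤ s}.ncard : ℝ) ∧
      ({y : V | ρ x y ≤ s}.ncard : ℝ) ≤ c * s ^ d

/-- The range of summation in the theorem: pairs whose first entry is within `R` of the centre `z`
and whose second entry is within `r` of the first. -/
def pairsWithin (ρ : V → V → ℝ) (z : V) (R r : ℝ) : Set (V × V) :=
  {p | ρ z p.1 ≤ R ∧ ρ p.1 p.2 ≤ r}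

namespace IsBallRegular

lemma const_nonneg (h : IsBallRegular ρ c d) (x : V) : 0 ≤ c := by
  simpa only [Real.one_rpow, mul_one] using (Nat.cast_nonneg _).trans (h x 1 le_rfl).2.2

lemma finite_pairsWithin (h : IsBallRegular ρ c d) (z : V) {R r : ℝ} (hR : 1 ≤ R) (hr : 1 ≤ r) :
    (pairsWithin ρ z R r).Finite :=
  finite_setOf_fst_mem_and_snd_mem (h z R hR).1 fun x _ => (h x r hr).1

lemma ncard_pairsWithin (h : IsBallRegular ρ c d) (z : V) {R r : ℝ} (hR : 1 ≤ R) (hr : 1 ≤ r) :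
    ((pairsWithin ρ z R r).ncard : ℝ) =
      ∑ᶠ x ∈ {x | ρ z x ≤ R}, ({y | ρ x y ≤ r}.ncard : ℝ) := by
  rw [← Nat.cast_finsum_mem (h z R hR).1,
    ← ncard_setOf_fst_mem_and_snd_mem (h z R hR).1 fun x _ => (h x r hr).1]
  rfl

lemma le_ncard_pairsWithin (h : IsBallRegular ρ c d) (z : V) {R r : ℝ} (hR : 1 ≤ R)
    (hr : 1 ≤ r) : c⁻¹ ^ 2 * r ^ d * R ^ d ≤ (pairsWithin ρ z R r).ncard := by
  have hc : 0 ≤ c⁻¹ := inv_nonneg.2 (h.const_nonneg z)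
  calc c⁻¹ ^ 2 * r ^ d * R ^ d = c⁻¹ * R ^ d * (c⁻¹ * r ^ d) := by ring
    _ ≤ {x | ρ z x ≤ R}.ncard * (c⁻¹ * r ^ d) := by gcongr; exact (h z R hR).2.1
    _ = {x | ρ z x ≤ R}.ncard • (c⁻¹ * r ^ d) := (nsmul_eq_mul _ _).symm
    _ ≤ ∑ᶠ x ∈ {x | ρ z x ≤ R}, ({y | ρ x y ≤ r}.ncard : ℝ) :=
      ncard_nsmul_le_finsum_mem (h z R hR).1 fun x _ => (h x r hr).2.1
    _ = (pairsWithin ρ z R r).ncard := (h.ncard_pairsWithin z hR hr).symm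

lemma ncard_pairsWithin_le (h : IsBallRegular ρ c d) (z : V) {R r : ℝ} (hR : 1 ≤ R)
    (hr : 1 ≤ r) : (pairsWithin ρ z R r).ncard ≤ c ^ 2 * r ^ d * R ^ d := by
  have hc : 0 ≤ c := h.const_nonneg z
  calc ((pairsWithin ρ z R r).ncard : ℝ)
      = ∑ᶠ x ∈ {x | ρ z x ≤ R}, ({y | ρ x y ≤ r}.ncard : ℝ) := h.ncard_pairsWithin z hR hr
    _ ≤ {x | ρ z x ≤ R}.ncard • (c * r ^ d) :=
      finsum_mem_le_ncard_nsmul (h z R hR).1 fun x _ => (h x r hr).2.2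
    _ = {x | ρ z x ≤ R}.ncard * (c * r ^ d) := nsmul_eq_mul _ _
    _ ≤ c * R ^ d * (c * r ^ d) := by gcongr; exact (h z R hR).2.2
    _ = c ^ 2 * r ^ d * R ^ d := by ring

lemma le_finsum_mem_pairsWithin (h : IsBallRegular ρ c d) (z : V) {R r : ℝ} (hR : 1 ≤ R)
    (hr : 1 ≤ r) {J : V × V → ℝ} {a : ℝ} (ha : 0 ≤ a) (hJ : ∀ p ∈ pairsWithin ρ z R r, a ≤ J p) :
    a * c⁻¹ ^ 2 * r ^ d * R ^ d ≤ ∑ᶠ p ∈ pairsWithin ρ z R r, J p :=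
  calc a * c⁻¹ ^ 2 * r ^ d * R ^ d = c⁻¹ ^ 2 * r ^ d * R ^ d * a := by ring
    _ ≤ (pairsWithin ρ z R r).ncard * a := by gcongr; exact h.le_ncard_pairsWithin z hR hr
    _ = (pairsWithin ρ z R r).ncard • a := (nsmul_eq_mul _ _).symm
    _ ≤ ∑ᶠ p ∈ pairsWithin ρ z R r, J p :=
      ncard_nsmul_le_finsum_mem (h.finite_pairsWithin z hR hr) hJ

lemma finsum_mem_pairsWithin_le (h : IsBallRegular ρ c d) (z : V) {R r : ℝ} (hR : 1 ≤ R)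
    (hr : 1 ≤ r) {J : V × V → ℝ} {b : ℝ} (hb : 0 ≤ b) (hJ : ∀ p ∈ pairsWithin ρ z R r, J p ≤ b) :
    ∑ᶠ p ∈ pairsWithin ρ z R r, J p ≤ b * c ^ 2 * r ^ d * R ^ d :=
  calc ∑ᶠ p ∈ pairsWithin ρ z R r, J p ≤ (pairsWithin ρ z R r).ncard • b :=
      finsum_mem_le_ncard_nsmul (h.finite_pairsWithin z hR hr) hJ
    _ = (pairsWithin ρ z R r).ncard * b := nsmul_eq_mul _ _
    _ ≤ c ^ 2 * r ^ d * R ^ d * b := by gcongr; exact h.ncard_pairsWithin_le z hR hr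
    _ = b * c ^ 2 * r ^ d * R ^ d := by ring

lemma finsum_mem_pairsWithin_mem_Icc_of_abs_le (h : IsBallRegular ρ c d) (z : V) {R r : ℝ}
    (hR : 1 ≤ R) (hr : 1 ≤ r) {w J : V × V → ℝ} {a b ε : ℝ} (ha : 0 ≤ a) (hb : 0 ≤ b)
    (hJ : ∀ p ∈ pairsWithin ρ z R r, J p ∈ Set.Icc a b)
    (hdev : |∑ᶠ p ∈ pairsWithin ρ z R r, (w p - J p)| ≤ ε * r ^ d * R ^ d) :
    ∑ᶠ p ∈ pairsWithin ρ z R r, w p ∈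
      Set.Icc ((a * c⁻¹ ^ 2 - ε) * r ^ d * R ^ d) ((b * c ^ 2 + ε) * r ^ d * R ^ d) := by
  rw [finsum_mem_sub_distrib _ _ (h.finite_pairsWithin z hR hr)] at hdev
  have hlower := h.le_finsum_mem_pairsWithin z hR hr ha fun p hp => (hJ p hp).1
  have hupper := h.finsum_mem_pairsWithin_le z hR hr hb fun p hp => (hJ p hp).2
  have ⟨hneg, hpos⟩ := abs_le.1 hdev
  constructor <;> linarith

end IsBallRegular

end BallRegularity

lemma ae_eventually_forall_notMem {Ω κ : Type*} [MeasurableSpace Ω] {μ : Measure Ω} [Countable κ]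
    {p : ℕ → κ → Prop} [∀ n, DecidablePred (p n)] {s : ℕ → κ → Set Ω}
    (h : (∑' (n : ℕ) (k : κ), if p n k then μ (s n k) else 0) ≠ ⊤) :
    ∀ᵐ ω ∂μ, ∀ᶠ n in Filter.atTop, ∀ k, p n k → ω ∉ s n k := by
  have hunion (n : ℕ) :
      μ (⋃ k, {ω | p n k ∧ ω ∈ s n k}) ≤ ∑' k, if p n k then μ (s n k) else 0 :=
    (measure_iUnion_le _).trans <| ENNReal.tsum_le_tsum fun k => by
      by_cases hp : p n k <;> simp [hp]
  filter_upwards [ae_eventually_notMem (ne_top_of_le_ne_top h (ENNReal.tsum_le_tsum hunion))]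
    with ω hω
  filter_upwards [hω] with n hn k hp hs
  exact hn (Set.mem_iUnion.2 ⟨k, hp, hs⟩)

lemma exists_real_threshold_of_eventually_atTop {p : ℕ → Prop} (h : ∀ᶠ n in Filter.atTop, p n) :
    ∃ R0 : ℝ, 1 ≤ R0 ∧ ∀ n : ℕ, R0 < n → p n := by
  obtain ⟨N, hN⟩ := Filter.eventually_atTop.1 h
  refine ⟨max 1 N, le_max_left _ _, fun n hn => hN n ?_⟩
  exact_mod_cast ((le_max_right _ _).trans_lt hn).le

theorem stmt_14_general {V Ω : Type*} {ρ : V → V → ℝ} {c d : ℝ} (hρ : IsBallRegular ρ c d) (z : V)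
    [MeasurableSpace Ω] {μ : Measure Ω} {w : V → V → Ω → ℝ} {J : V → V → ℝ} {a b ε : ℝ}
    (ha : 0 ≤ a) (hJ : ∀ x y, a ≤ J x y ∧ J x y ≤ b)
    (hsum : (∑' (R : ℕ) (r : ℕ),
      if 1 ≤ r ∧ r ≤ R then
        μ {ω | ε * (r : ℝ) ^ d * (R : ℝ) ^ d <
          |∑ᶠ p ∈ pairsWithin ρ z R r, (w p.1 p.2 ω - J p.1 p.2)|}
      else 0) ≠ ⊤) :
    ∀ᵐ ω ∂μ, ∃ R0 : ℝ, 1 ≤ R0 ∧ ∀ R : ℕ, R0 < R → ∀ r : ℕ, 1 ≤ r → r ≤ R →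
      (a * c⁻¹ ^ 2 - ε) * (r : ℝ) ^ d * (R : ℝ) ^ d ≤ ∑ᶠ p ∈ pairsWithin ρ z R r, w p.1 p.2 ω ∧
        ∑ᶠ p ∈ pairsWithin ρ z R r, w p.1 p.2 ω ≤
          (b * c ^ 2 + ε) * (r : ℝ) ^ d * (R : ℝ) ^ d := by
  have hb : 0 ≤ b := ha.trans ((hJ z z).1.trans (hJ z z).2)
  filter_upwards [ae_eventually_forall_notMem hsum] with ω hω
  refine exists_real_threshold_of_eventually_atTop (hω.mono fun R hdev r hr hrR => ?_)
  exact hρ.finsum_mem_pairsWithin_mem_Icc_of_abs_le z (Nat.one_le_cast.2 (hr.trans hrR))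
    (Nat.one_le_cast.2 hr) ha hb (fun p _ => hJ p.1 p.2) (not_lt.1 (hdev r ⟨hr, hrR⟩))

/-- Borel–Cantelli consequence (from the proof of Lemma 5.4): under the
summability of the probabilities `p₁(r,R,ε₀)` over integers `1 ≤ r ≤ R`,
there are deterministic constants `0 < c₁ ≤ c₂` (depending only on
`C₁, C₂, c_V, d, ε₀`) such that almost surely, for some random threshold
`R₀(ω)` and all integers `R > R₀(ω)` and `1 ≤ r ≤ R`,
`c₁ r^d R^d ≤ ∑_{x,y : ρ(0,x) ≤ R, ρ(x,y) ≤ r} w_{x,y}(ω) ≤ c₂ r^d R^d`. -/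
theorem stmt_14
    (C1 C2 cV d ε0 : ℝ)
    (hC1 : 0 < C1) (hC12 : C1 ≤ C2) (hcV : 1 ≤ cV) (hd : 0 < d)
    (hε0 : 0 < ε0) (hε0' : ε0 < C1 * (cV⁻¹) ^ 2 / 2) :
    ∃ c1 c2 : ℝ, 0 < c1 ∧ c1 ≤ c2 ∧
      ∀ (V1 : Type) [Countable V1] (ρ : V1 → V1 → ℝ)
        (_hρ_self : ∀ x : V1, ρ x x = 0)
        (_hρ_symm : ∀ x y : V1, ρ x y = ρ y x)
        (_hρ_tri : ∀ x y z : V1, ρ x z ≤ ρ x y + ρ y z)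
        (_hρ_sep : ∀ x y : V1, x ≠ y → 1 ≤ ρ x y)
        (z0 : V1)
        (_hball : ∀ (x : V1) (s : ℝ), 1 ≤ s →
          {y : V1 | ρ x y ≤ s}.Finite ∧
            cV⁻¹ * s ^ d ≤ ({y : V1 | ρ x y ≤ s}.ncard : ℝ) ∧
            ({y : V1 | ρ x y ≤ s}.ncard : ℝ) ≤ cV * s ^ d)
        (Ω : Type) [MeasurableSpace Ω] (P : Measure Ω) [IsProbabilityMeasure P]
        (w : V1 → V1 → Ω → ℝ)
        (_hw_nonneg : ∀ x y ω, 0 ≤ w x y ω)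
        (_hw_meas : ∀ x y, Measurable (w x y))
        (J1 : V1 → V1 → ℝ)
        (_hJ : ∀ x y, C1 ≤ J1 x y ∧ J1 x y ≤ C2)
        (_hsum : (∑' (R : ℕ) (r : ℕ),
            if 1 ≤ r ∧ r ≤ R then
              P {ω | ε0 * (r : ℝ) ^ d * (R : ℝ) ^ d <
                  |∑ᶠ p ∈ {p : V1 × V1 |
                      ρ z0 p.1 ≤ (R : ℝ) ∧ ρ p.1 p.2 ≤ (r : ℝ)},
                    (w p.1 p.2 ω - J1 p.1 p.2)|}
            else 0) ≠ ⊤),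
        ∀ᵐ ω ∂P, ∃ R0 : ℝ, 1 ≤ R0 ∧
          ∀ R : ℕ, R0 < (R : ℝ) → ∀ r : ℕ, 1 ≤ r → r ≤ R →
            c1 * (r : ℝ) ^ d * (R : ℝ) ^ d ≤
                (∑ᶠ p ∈ {p : V1 × V1 |
                    ρ z0 p.1 ≤ (R : ℝ) ∧ ρ p.1 p.2 ≤ (r : ℝ)}, w p.1 p.2 ω) ∧
              (∑ᶠ p ∈ {p : V1 × V1 |
                  ρ z0 p.1 ≤ (R : ℝ) ∧ ρ p.1 p.2 ≤ (r : ℝ)}, w p.1 p.2 ω) ≤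
                c2 * (r : ℝ) ^ d * (R : ℝ) ^ d := by
  have hconst : C1 * cV⁻¹ ^ 2 ≤ C2 * cV ^ 2 := by
    have hcV_inv : cV⁻¹ ≤ cV := (inv_le_one_of_one_le₀ hcV).trans hcV
    have hC2 : 0 ≤ C2 := hC1.le.trans hC12
    gcongr
  exact ⟨C1 * cV⁻¹ ^ 2 - ε0, C2 * cV ^ 2 + ε0, by linarith, by linarith,
    fun _ _ _ _ _ _ _ z0 hball _ _ _ _ _ _ _ _ hJ hsum =>
      stmt_14_general hball z0 hC1.le hJ hsum⟩
end

section
/- Let t ≥ 0, T > 0, x ∈ V, and let r be a real number with r ≥ 2 and 2r < r_G. Let A ⊆ (t, t+T) × B(x, r/2) be a Borel measurable subset of ℝ × V (V carrying the discrete topology) with ν(A) ≥ (1/2)·ν( (t,t+T) × B(x, r/2) ), where ν is the product of Lebesgue measure on ℝ and μ on V, and write A_s := { u ∈ V : (s,u) ∈ A }. Assume: (i) Σ_{u∈B^w(z,2r)} w_{z,u}^{−1} ≤ C_1·r^d for every z ∈ B(x,r); and (ii) μ( B_z^w(x, r/2) ) ≥ c_0·μ( B(x, r/2) ) for every z ∈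 B(x,r), where c_0 > 1/2. Then there is a constant c > 0, depending only on C_1, c_0, c_M, c_G and d, such that for every z ∈ B(x,r): ∫_t^{t+T} Σ_{u∈A_s} w_{z,u} ds ≥ c·T·r^d. -/
open scoped ENNReal
open Classical MeasureTheory

/-!
Fix `z` and let `G` be the set of `u ∈ B(x, r/2)` with `w_{z,u} > 0`. Since `A` fills half of the
cylinder over `B(x, r/2)` and `G` has density `c₀ > 1/2` in the ball, `A` keeps at least the
proportion `c₀ - 1/2` of the cylinder inside the part lying over `G`. Hence, with `L u` the length
of the time section of `A` at `u`, the sum `∑_{u ∈ G} L u` is bounded below by a multiple of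
`T r ^ d`. Cauchy-Schwarz gives
`(∑_G L u) ^ 2 ≤ (∑_G w_{z,u} L u) (∑_G w_{z,u}⁻¹ L u)`,
where the last factor is at most `C₁ r ^ d T` because `L u ≤ T`, while the first one is at most the
space-time integral to be estimated.
-/

section Weights

variable {ι : Type*}

theorem sq_tsum_le_tsum_mul_tsum_of_sq_le_mul {p f g : ι → ℝ≥0∞}
    (h : ∀ i, p i ^ 2 ≤ f i * g i) : (∑' i, p i) ^ 2 ≤ (∑' i, f i) * ∑' i, g i := by
  let _ : MeasurableSpace ι := ⊤
  have p_le (i : ι) : p i ≤ f i ^ (2⁻¹ : ℝ) * g i ^ (2⁻¹ : ℝ) := by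
    rw [← ENNReal.mul_rpow_of_nonneg _ _ (by norm_num), ENNReal.le_rpow_inv_iff two_pos]
    simpa only [ENNReal.rpow_two] using h i
  have holder : ∑' i, p i ≤ (∑' i, f i) ^ (2⁻¹ : ℝ) * (∑' i, g i) ^ (2⁻¹ : ℝ) := by
    simp only [← lintegral_count]
    exact (lintegral_mono p_le).trans <|
      ENNReal.lintegral_mul_norm_pow_le Measurable.of_discrete.aemeasurable
        Measurable.of_discrete.aemeasurable (by norm_num) (by norm_num) (by norm_num)
  rwa [← ENNReal.mul_rpow_of_nonneg _ _ (by norm_num), ENNReal.le_rpow_inv_iff two_pos,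
    ENNReal.rpow_two] at holder

theorem tsum_subtype_eq_tsum_ite (p : ι → Prop) [DecidablePred p] (f : ι → ℝ≥0∞) :
    ∑' i : {i | p i}, f i = ∑' i, if p i then f i else 0 := by
  simp only [tsum_subtype, Set.indicator_apply, Set.mem_ofPred_eq]

theorem tsum_inv_ofReal_le_tsum_ite {p q : ι → Prop} [DecidablePred q] (hpq : ∀ i, p i → q i)
    (w : ι → ℝ) :
    ∑' i : {i | p i ∧ 0 < w i}, (ENNReal.ofReal (w i))⁻¹ ≤
      ∑' i, if q i ∧ 0 < w i then ENNReal.ofReal (w i)⁻¹ else 0 := by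
  rw [tsum_subtype_eq_tsum_ite _ fun i ↦ (ENNReal.ofReal (w i))⁻¹]
  refine ENNReal.tsum_le_tsum fun i ↦ ?_
  by_cases hi : p i ∧ 0 < w i
  · rw [if_pos hi, if_pos (hi.imp_left (hpq i)), ENNReal.ofReal_inv_of_pos hi.2]
  · rw [if_neg hi]
    exact zero_le

/-- Inclusion-exclusion, without subtraction, for a set with sections of measure `L i` and the
cylinder over `G`. -/
theorem tsum_mul_add_mul_tsum_subtype_le (G : Set ι) (m : ι → ℝ≥0∞) {L : ι → ℝ≥0∞} {T : ℝ≥0∞}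
    (hL : ∀ i, L i ≤ T) :
    ∑' i, m i * L i + (∑' i : G, m i) * T ≤ ∑' i : G, m i * L i + (∑' i, m i) * T := by
  have compl_le : ∑' i : ↑Gᶜ, m i * L i ≤ (∑' i : ↑Gᶜ, m i) * T := by
    rw [← ENNReal.tsum_mul_right]
    gcongr
    exact hL _
  calc ∑' i, m i * L i + (∑' i : G, m i) * T
      = ∑' i : G, m i * L i + ∑' i : ↑Gᶜ, m i * L i + (∑' i : G, m i) * T := by
        rw [ENNReal.summable.tsum_add_tsum_compl (f := fun i ↦ m i * L i) ENNReal.summable]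
    _ ≤ ∑' i : G, m i * L i + (∑' i : ↑Gᶜ, m i) * T + (∑' i : G, m i) * T := by gcongr
    _ = ∑' i : G, m i * L i + (∑' i : G, m i + ∑' i : ↑Gᶜ, m i) * T := by ring
    _ = ∑' i : G, m i * L i + (∑' i, m i) * T := by
        rw [ENNReal.summable.tsum_add_tsum_compl ENNReal.summable]

theorem add_sub_one_mul_le_tsum_subtype_mul {G : Set ι} {m L : ι → ℝ≥0∞} {T a b : ℝ≥0∞}
    (hm : ∑' i, m i ≠ ⊤) (hT : T ≠ ⊤) (hL : ∀ i, L i ≤ T)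
    (ha : a * ((∑' i, m i) * T) ≤ ∑' i, m i * L i) (hb : b * ∑' i, m i ≤ ∑' i : G, m i) :
    (a + b - 1) * ((∑' i, m i) * T) ≤ ∑' i : G, m i * L i := by
  rw [ENNReal.sub_mul fun _ _ ↦ by finiteness, one_mul, tsub_le_iff_right]
  calc (a + b) * ((∑' i, m i) * T)
      = a * ((∑' i, m i) * T) + b * (∑' i, m i) * T := by ring
    _ ≤ ∑' i, m i * L i + (∑' i : G, m i) * T := by gcongr
    _ ≤ ∑' i : G, m i * L i + (∑' i, m i) * T := tsum_mul_add_mul_tsum_subtype_le G m hL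

end Weights

section Sections

variable {ι Ω : Type*} [MeasurableSpace Ω]

theorem tsum_mul_measure_le_lintegral_tsum_indicator (P : Measure Ω) {S : ι → Set Ω}
    (hS : ∀ i, MeasurableSet (S i)) (w : ι → ℝ≥0∞) :
    ∑' i, w i * P (S i) ≤ ∫⁻ s, ∑' i, (S i).indicator (fun _ ↦ w i) s ∂P := by
  rw [ENNReal.tsum_eq_iSup_sum]
  refine iSup_le fun F ↦ ?_
  calc ∑ i ∈ F, w i * P (S i)
      = ∫⁻ s, ∑ i ∈ F, (S i).indicator (fun _ ↦ w i) s ∂P := by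
        rw [lintegral_finsetSum _ fun i _ ↦ measurable_const.indicator (hS i)]
        simp only [lintegral_indicator_const (hS _)]
    _ ≤ ∫⁻ s, ∑' i, (S i).indicator (fun _ ↦ w i) s ∂P :=
        lintegral_mono fun _ ↦ ENNReal.sum_le_tsum F

theorem sq_tsum_measure_le_lintegral_tsum_indicator_mul {P : Measure Ω} {I : Set Ω}
    {S : ι → Set Ω} (hS : ∀ i, MeasurableSet (S i)) (hSI : ∀ i, S i ⊆ I) {G : Set ι}
    {w : ι → ℝ≥0∞} (hw : ∀ i ∈ G, w i ≠ 0) (hw' : ∀ i ∈ G, w i ≠ ⊤) :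
    (∑' i : G, P (S i)) ^ 2 ≤
      (∫⁻ s in I, ∑' i, (S i).indicator (fun _ ↦ w i) s ∂P) * ((∑' i : G, (w i)⁻¹) * P I) := by
  have weighted_le : ∑' i : G, w i * P (S i) ≤
      ∫⁻ s in I, ∑' i, (S i).indicator (fun _ ↦ w i) s ∂P := by
    refine (ENNReal.tsum_comp_le_tsum_of_injective Subtype.val_injective
      fun i ↦ w i * P (S i)).trans ?_
    simpa only [Measure.restrict_eq_self P (hSI _)] using
      tsum_mul_measure_le_lintegral_tsum_indicator (P.restrict I) hS w
  have inv_weighted_le : ∑' i : G, (w i)⁻¹ * P (S i) ≤ (∑' i : G, (w i)⁻¹) * P I := by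
    rw [← ENNReal.tsum_mul_right]
    gcongr
    exact hSI _
  calc (∑' i : G, P (S i)) ^ 2
      ≤ (∑' i : G, w i * P (S i)) * ∑' i : G, (w i)⁻¹ * P (S i) :=
        sq_tsum_le_tsum_mul_tsum_of_sq_le_mul fun i ↦ le_of_eq <| by
          rw [mul_mul_mul_comm, ENNReal.mul_inv_cancel (hw i i.2) (hw' i i.2), one_mul, sq]
    _ ≤ _ := mul_le_mul' weighted_le inv_weighted_le

theorem tsum_ite_mul_measure_section (P : Measure Ω) {I : Set Ω} {p : ι → Prop} [DecidablePred p]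
    {A : Set (Ω × ι)} (hA : A ⊆ I ×ˢ {i | p i}) (m : ι → ℝ≥0∞) :
    ∑' i, (if p i then m i else 0) * P {s | (s, i) ∈ A} = ∑' i, m i * P {s | (s, i) ∈ A} := by
  refine tsum_congr fun i ↦ ?_
  by_cases hi : p i
  · rw [if_pos hi]
  · have section_eq_empty : {s | (s, i) ∈ A} = ∅ :=
      Set.eq_empty_of_forall_notMem fun s hs ↦ hi (hA hs).2
    simp only [section_eq_empty, measure_empty, mul_zero]

theorem sq_add_sub_one_mul_le_lintegral_tsum_indicator {P : Measure Ω} {I : Set Ω}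
    (hI₀ : P I ≠ 0) (hI : P I ≠ ⊤) {S : ι → Set Ω} (hS : ∀ i, MeasurableSet (S i))
    (hSI : ∀ i, S i ⊆ I) {G : Set ι} {w : ι → ℝ≥0∞} (hw : ∀ i ∈ G, w i ≠ 0)
    (hw' : ∀ i ∈ G, w i ≠ ⊤) {m : ι → ℝ≥0∞} {M : ℝ≥0∞} (hM : ∀ i, m i ≤ M)
    (hm : ∑' i, m i ≠ ⊤) {a b : ℝ≥0∞}
    (ha : a * ((∑' i, m i) * P I) ≤ ∑' i, m i * P (S i)) (hb : b * ∑' i, m i ≤ ∑' i : G, m i) :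
    ((a + b - 1) * ∑' i, m i) ^ 2 * P I ≤
      M ^ 2 * (∑' i : G, (w i)⁻¹) *
        ∫⁻ s in I, ∑' i, (S i).indicator (fun _ ↦ w i) s ∂P := by
  have mass_le : (a + b - 1) * (∑' i, m i) * P I ≤ M * ∑' i : G, P (S i) :=
    calc (a + b - 1) * (∑' i, m i) * P I
        ≤ ∑' i : G, m i * P (S i) := by
          rw [mul_assoc]
          exact add_sub_one_mul_le_tsum_subtype_mul hm hI (fun i ↦ measure_mono (hSI i)) ha hb
      _ ≤ M * ∑' i : G, P (S i) := by
          rw [← ENNReal.tsum_mul_left]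
          gcongr
          exact hM _
  rw [← ENNReal.mul_le_mul_iff_left hI₀ hI]
  calc ((a + b - 1) * ∑' i, m i) ^ 2 * P I * P I
      = ((a + b - 1) * (∑' i, m i) * P I) ^ 2 := by ring
    _ ≤ (M * ∑' i : G, P (S i)) ^ 2 := by gcongr
    _ = M ^ 2 * (∑' i : G, P (S i)) ^ 2 := mul_pow ..
    _ ≤ M ^ 2 * _ :=
        mul_right_mono (sq_tsum_measure_le_lintegral_tsum_indicator_mul hS hSI hw hw')
    _ = _ := by ring

end Sections

section Cylinder

/-- The constant of the estimate `∫_t^{t+T} ∑_{u ∈ A_s} w_{z,u} ds ≥ c T r ^ d`. The quantity that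
is squared is the lower bound for `(∑_{u ∈ G} L u) / (T r ^ d)`. -/
noncomputable def krylovConst (C₁ c₀ cM cG d : ℝ) : ℝ :=
  ((c₀ - 1 / 2) * (cG⁻¹ * (1 / 2) ^ d) / cM) ^ 2 / C₁

theorem krylovConst_pos {C₁ c₀ cM cG : ℝ} (d : ℝ) (hC₁ : 0 < C₁) (hc₀ : 1 / 2 < c₀)
    (hcM : 0 < cM) (hcG : 0 < cG) : 0 < krylovConst C₁ c₀ cM cG d := by
  have := sub_pos.2 hc₀
  unfold krylovConst
  positivity

theorem inv_two_add_ofReal_sub_one {c : ℝ} (hc : 0 ≤ c) :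
    2⁻¹ + ENNReal.ofReal c - 1 = ENNReal.ofReal (c - 1 / 2) := by
  have inv_two : (2⁻¹ : ℝ≥0∞) = ENNReal.ofReal 2⁻¹ := by
    rw [ENNReal.ofReal_inv_of_pos two_pos, ENNReal.ofReal_ofNat]
  rw [inv_two, ← ENNReal.ofReal_add (by norm_num) hc, ← ENNReal.ofReal_one,
    ← ENNReal.ofReal_sub _ zero_le_one]
  congr 1
  ring

theorem ofReal_krylovConst_mul_le {C₁ c₀ cM cG d r T : ℝ} (hC₁ : 0 < C₁) (hc₀ : 1 / 2 < c₀)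
    (hcM : 0 < cM) (hcG : 0 < cG) (hr : 0 < r) {J : ℝ≥0∞}
    (h : (ENNReal.ofReal (c₀ - 1 / 2) * ENNReal.ofReal (cG⁻¹ * (r / 2) ^ d)) ^ 2 *
      ENNReal.ofReal T ≤ ENNReal.ofReal cM ^ 2 * ENNReal.ofReal (C₁ * r ^ d) * J) :
    ENNReal.ofReal (krylovConst C₁ c₀ cM cG d * T * r ^ d) ≤ J := by
  have hc₀' := sub_pos.2 hc₀
  have factor_pos : 0 < cM ^ 2 * (C₁ * r ^ d) := by positivity
  have half_rpow : (r / 2) ^ d = (1 / 2) ^ d * r ^ d := by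
    rw [← Real.mul_rpow (by norm_num) hr.le, one_div_mul_eq_div]
  have clear_denominators : cM ^ 2 * (C₁ * r ^ d) * (krylovConst C₁ c₀ cM cG d * T * r ^ d) =
      ((c₀ - 1 / 2) * (cG⁻¹ * (r / 2) ^ d)) ^ 2 * T := by
    rw [half_rpow, krylovConst]
    field_simp
  rw [← ENNReal.mul_le_mul_iff_right (ENNReal.ofReal_pos.2 factor_pos).ne' ENNReal.ofReal_ne_top,
    ← ENNReal.ofReal_mul factor_pos.le, clear_denominators,
    ENNReal.ofReal_mul (by positivity), ENNReal.ofReal_pow (by positivity),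
    ENNReal.ofReal_mul hc₀'.le, ENNReal.ofReal_mul (sq_nonneg cM), ENNReal.ofReal_pow hcM.le]
  exact h

theorem stmt_15_general {C₁ c₀ cM cG d : ℝ} (hC₁ : 0 < C₁) (hc₀ : 1 / 2 < c₀) (hcM : 0 < cM)
    (hcG : 0 < cG) {V : Type*} {ρ : V → V → ℝ} (hρ_symm : ∀ x y, ρ x y = ρ y x)
    (hρ_tri : ∀ x y z, ρ x z ≤ ρ x y + ρ y z) {μ : V → ℝ} (hμ : ∀ u, 0 ≤ μ u ∧ μ u ≤ cM)
    {w : V → V → ℝ} (_hw_nonneg : ∀ u v, 0 ≤ w u v) (hw_symm : ∀ u v, w u v = w v u)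
    {Ω : Type*} [MeasurableSpace Ω] {P : Measure Ω} {I : Set Ω} {T : ℝ} (hT : 0 < T)
    (hI : P I = ENNReal.ofReal T) {x z : V} {r : ℝ} (hr : 0 < r) (hz : ρ x z ≤ r)
    (hball : ENNReal.ofReal (cG⁻¹ * (r / 2) ^ d) ≤
      ∑' u, if ρ x u ≤ r / 2 then ENNReal.ofReal (μ u) else 0)
    (hball_fin : (∑' u, if ρ x u ≤ r / 2 then ENNReal.ofReal (μ u) else 0) ≠ ⊤)
    {A : Set (Ω × V)} (hA_meas : ∀ u, MeasurableSet {s | (s, u) ∈ A})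
    (hA_sub : A ⊆ I ×ˢ {u | ρ x u ≤ r / 2})
    (hA_big : 2⁻¹ * (∑' u, if ρ x u ≤ r / 2 then
        ENNReal.ofReal (μ u) * ENNReal.ofReal T else 0) ≤
      ∑' u, ENNReal.ofReal (μ u) * P {s | (s, u) ∈ A})
    (hinv : (∑' u, if ρ z u ≤ 2 * r ∧ 0 < w z u then ENNReal.ofReal (w z u)⁻¹ else 0) ≤
      ENNReal.ofReal (C₁ * r ^ d))
    (hdense : ENNReal.ofReal c₀ *
        (∑' u, if ρ x u ≤ r / 2 then ENNReal.ofReal (μ u) else 0) ≤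
      ∑' u, if ρ x u ≤ r / 2 ∧ 0 < w u z then ENNReal.ofReal (μ u) else 0) :
    ENNReal.ofReal (krylovConst C₁ c₀ cM cG d * T * r ^ d) ≤
      ∫⁻ s in I, ∑' u, if (s, u) ∈ A then ENNReal.ofReal (w z u) else 0 ∂P := by
  set m : V → ℝ≥0∞ := fun u ↦ if ρ x u ≤ r / 2 then ENNReal.ofReal (μ u) else 0
  let G : Set V := {u | ρ x u ≤ r / 2 ∧ 0 < w z u}
  have m_le (u : V) : m u ≤ ENNReal.ofReal cM := by
    simp only [m]
    split_ifs
    exacts [ENNReal.ofReal_le_ofReal (hμ u).2, zero_le]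
  have half_filled : 2⁻¹ * ((∑' u, m u) * P I) ≤ ∑' u, m u * P {s | (s, u) ∈ A} := by
    rw [tsum_ite_mul_measure_section P hA_sub]
    simpa only [m, hI, ← ENNReal.tsum_mul_right, ite_mul, zero_mul] using hA_big
  have dense : ENNReal.ofReal c₀ * ∑' u, m u ≤ ∑' u : G, m u := by
    refine hdense.trans_eq ?_
    rw [tsum_subtype_eq_tsum_ite _ m]
    exact tsum_congr fun u ↦ by simp only [m, hw_symm u z]; split_ifs <;> tauto
  have tsum_inv_le : ∑' u : G, (ENNReal.ofReal (w z u))⁻¹ ≤ ENNReal.ofReal (C₁ * r ^ d) :=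
    (tsum_inv_ofReal_le_tsum_ite
      (fun u hu ↦ by linarith [hρ_tri z x u, hρ_symm z x]) (w z)).trans hinv
  refine ofReal_krylovConst_mul_le hC₁ hc₀ hcM hcG hr ?_
  calc (ENNReal.ofReal (c₀ - 1 / 2) * ENNReal.ofReal (cG⁻¹ * (r / 2) ^ d)) ^ 2 * ENNReal.ofReal T
      ≤ ((2⁻¹ + ENNReal.ofReal c₀ - 1) * ∑' u, m u) ^ 2 * P I := by
        rw [inv_two_add_ofReal_sub_one (by linarith), hI]
        gcongr
    _ ≤ ENNReal.ofReal cM ^ 2 * (∑' u : G, (ENNReal.ofReal (w z u))⁻¹) * _ :=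
        sq_add_sub_one_mul_le_lintegral_tsum_indicator (by simpa [hI]) (by simp [hI]) hA_meas
          (fun _ _ hs ↦ (hA_sub hs).1) (w := fun u ↦ ENNReal.ofReal (w z u))
          (fun _ hu ↦ (ENNReal.ofReal_pos.2 hu.2).ne') (fun _ _ ↦ ENNReal.ofReal_ne_top) m_le
          hball_fin half_filled dense
    _ ≤ _ := by
        simp only [Set.indicator_apply, Set.mem_ofPred_eq]
        gcongr

end Cylinder

/-- Krylov-type estimate from the proof of Proposition 3.4: if
`A ⊆ (t,t+T) × B(x,r/2)` occupies at least half of the space-time cylinder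
(for the measure `ν = Leb × μ`), and the weights satisfy the inverse-sum bound
(i) and the non-degeneracy bound (ii), then for every `z ∈ B(x,r)`,
`∫_t^{t+T} ∑_{u ∈ A_s} w_{z,u} ds ≥ c T r^d` with `c` depending only on
`C₁, c₀, c_M, c_G, d`. -/
theorem stmt_15
    (C1 c0 cM cG d : ℝ)
    (hC1 : 0 < C1) (hc0 : 1 / 2 < c0) (hcM : 1 ≤ cM) (hcG : 1 ≤ cG) (hd : 0 < d) :
    ∃ c : ℝ, 0 < c ∧
      ∀ (V : Type) [Countable V] (ρ : V → V → ℝ)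
        (_hρ_self : ∀ x : V, ρ x x = 0)
        (_hρ_symm : ∀ x y : V, ρ x y = ρ y x)
        (_hρ_tri : ∀ x y z : V, ρ x z ≤ ρ x y + ρ y z)
        (_hρ_sep : ∀ x y : V, x ≠ y → 1 ≤ ρ x y)
        (μ : V → ℝ)
        (_hμ : ∀ x : V, cM⁻¹ ≤ μ x ∧ μ x ≤ cM)
        (w : V → V → ℝ)
        (_hw_nonneg : ∀ x y : V, 0 ≤ w x y)
        (_hw_symm : ∀ x y : V, w x y = w y x)
        (_hw_diag : ∀ x : V, w x x = 0)
        (rG : ℝ≥0∞) (_hrG : 1 < rG)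
        (_hdset : ∀ (x : V) (r : ℝ), 1 ≤ r → ENNReal.ofReal r < rG →
          ENNReal.ofReal (cG⁻¹ * r ^ d)
              ≤ (∑' y : V, if ρ x y ≤ r then ENNReal.ofReal (μ y) else 0) ∧
            (∑' y : V, if ρ x y ≤ r then ENNReal.ofReal (μ y) else 0)
              ≤ ENNReal.ofReal (cG * r ^ d))
        (t T : ℝ) (_ht : 0 ≤ t) (_hT : 0 < T)
        (x : V) (r : ℝ) (_hr : 2 ≤ r) (_hrrG : ENNReal.ofReal (2 * r) < rG)
        (A : Set (ℝ × V))
        (_hAmeas : ∀ u : V, MeasurableSet {s : ℝ | (s, u) ∈ A})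
        (_hAsub : A ⊆ (Set.Ioo t (t + T)) ×ˢ {u : V | ρ x u ≤ r / 2})
        (_hAbig :
          2⁻¹ * (∑' u : V,
              if ρ x u ≤ r / 2 then ENNReal.ofReal (μ u) * ENNReal.ofReal T else 0)
            ≤ (∑' u : V, ENNReal.ofReal (μ u) * volume {s : ℝ | (s, u) ∈ A}))
        (_hi : ∀ z : V, ρ x z ≤ r →
          (∑' u : V, if ρ z u ≤ 2 * r ∧ 0 < w z u then
              ENNReal.ofReal ((w z u)⁻¹) else 0)
            ≤ ENNReal.ofReal (C1 * r ^ d))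
        (_hii : ∀ z : V, ρ x z ≤ r →
          ENNReal.ofReal c0 *
              (∑' u : V, if ρ x u ≤ r / 2 then ENNReal.ofReal (μ u) else 0)
            ≤ (∑' u : V, if ρ x u ≤ r / 2 ∧ 0 < w u z then
                ENNReal.ofReal (μ u) else 0)),
        ∀ z : V, ρ x z ≤ r →
          ENNReal.ofReal (c * T * r ^ d)
            ≤ ∫⁻ s in Set.Ioo t (t + T),
                ∑' u : V, if (s, u) ∈ A then ENNReal.ofReal (w z u) else 0 := by
  have cM_pos : 0 < cM := one_pos.trans_le hcM
  have cG_pos : 0 < cG := one_pos.trans_le hcG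
  refine ⟨krylovConst C1 c0 cM cG d, krylovConst_pos d hC1 hc0 cM_pos cG_pos, ?_⟩
  intro V _ ρ _ hρ_symm hρ_tri _ μ hμ w hw_nonneg hw_symm _ rG _ hdset t T _ hT x r hr hrG
    A hA_meas hA_sub hA_big hinv hdense z hz
  have μ_mem (u : V) : 0 ≤ μ u ∧ μ u ≤ cM := (hμ u).imp_left (inv_pos.2 cM_pos).le.trans
  have hball := hdset x (r / 2) (by linarith)
    ((ENNReal.ofReal_le_ofReal (by linarith)).trans_lt hrG)
  exact stmt_15_general hC1 hc0 cM_pos cG_pos hρ_symm hρ_tri μ_mem hw_nonneg hw_symm hT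
    (by rw [Real.volume_Ioo, add_sub_cancel_left]) (by linarith) hz hball.1
    (ne_top_of_le_ne_top ENNReal.ofReal_ne_top hball.2) hA_meas hA_sub hA_big (hinv z hz)
    (hdense z hz)
end
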